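/- Let π: O(G) → O(H) be a surjective morphism of Hopf algebras over an algebraically closed field k, with O(G) cosemisimple (i.e. G linearly reductive). Assume π is left-normal or right-normal, and that the square of the antipode of O(H) leaves every simple subcoalgebra of O(H) invariant. Then O(H) is cosemisimple and π is normal (both left- and right-normal). -/

import Mathlib

/- Common infrastructure: right comodules over coalgebras, simplicity,
cosemisimplicity, subcoalgebras, adjoint coactions, normality, etc. -/

open TensorProduct

universe u

namespace QG

variable (k : Type u) [Field k]

section Coalg

variable (C : Type u) [AddCommGroup C] [Module k C] [Coalgebra k C]

/-- `ρ : V →ₗ[k] V ⊗[k] C` is a (coassociative, counital) right coaction. -/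
structure IsComod {V : Type u} [AddCommGroup V] [Module k V]
    (ρ : V →ₗ[k] V ⊗[k] C) : Prop where
  coassoc : ∀ v : V, ρ.rTensor C (ρ v) =
    (TensorProduct.assoc k V C C).symm.toLinearMap
      ((Coalgebra.comul (R := k) (A := C)).lTensor V (ρ v))
  counit : ∀ v : V, (TensorProduct.rid k V)
      ((Coalgebra.counit (R := k) (A := C)).lTensor V (ρ v)) = v

/-- A submodule `U ≤ V` is a subcomodule if the coaction restricts to it,
i.e. maps `U` into the image of `U ⊗ C` in `V ⊗ C`. -/
def IsSubcomod {V : Type u} [AddCommGroup V] [Module k V]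
    (ρ : V →ₗ[k] V ⊗[k] C) (U : Submodule k V) : Prop :=
  ∀ u ∈ U, ρ u ∈ LinearMap.range ((U.subtype).rTensor C)

/-- A simple subcomodule: a nonzero subcomodule with no nonzero proper
subcomodules below it. -/
def IsSimpleSubcomod {V : Type u} [AddCommGroup V] [Module k V]
    (ρ : V →ₗ[k] V ⊗[k] C) (U : Submodule k V) : Prop :=
  IsSubcomod k C ρ U ∧ U ≠ ⊥ ∧
    ∀ U' : Submodule k V, U' ≤ U → IsSubcomod k C ρ U' → U' = ⊥ ∨ U' = U

/-- A comodule is simple if it is simple as a subcomodule of itself. -/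
def IsSimpleComod {V : Type u} [AddCommGroup V] [Module k V]
    (ρ : V →ₗ[k] V ⊗[k] C) : Prop :=
  IsSimpleSubcomod k C ρ ⊤

/-- Morphisms of right `C`-comodules. -/
def IsComodHom {V W : Type u} [AddCommGroup V] [Module k V]
    [AddCommGroup W] [Module k W]
    (ρV : V →ₗ[k] V ⊗[k] C) (ρW : W →ₗ[k] W ⊗[k] C) (f : V →ₗ[k] W) : Prop :=
  ρW ∘ₗ f = (f.rTensor C) ∘ₗ ρV

/-- `C` is cosemisimple: every right `C`-comodule is an (internal) direct sum
of simple subcomodules. -/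
def IsCosemisimple : Prop :=
  ∀ (V : Type u) [AddCommGroup V] [Module k V]
    (ρ : V →ₗ[k] V ⊗[k] C), IsComod k C ρ →
    ∃ (ι : Type u) (U : ι → Submodule k V),
      (∀ i, IsSimpleSubcomod k C ρ (U i)) ∧
      iSupIndep U ∧ (⨆ i, U i) = ⊤

/-- Subcoalgebras of `C`, as submodules. -/
def IsSubcoalgebra (D : Submodule k C) : Prop :=
  ∀ x ∈ D, Coalgebra.comul (R := k) x ∈
    LinearMap.range (TensorProduct.map D.subtype D.subtype)

/-- Simple subcoalgebras: nonzero ones with no nonzero proper subcoalgebras. -/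
def IsSimpleSubcoalgebra (D : Submodule k C) : Prop :=
  IsSubcoalgebra k C D ∧ D ≠ ⊥ ∧
    ∀ D' : Submodule k C, D' ≤ D → IsSubcoalgebra k C D' → D' = ⊥ ∨ D' = D

/-- The coefficient space of a comodule: the smallest submodule `D ≤ C` such
that the coaction factors through `V ⊗ D`.  For a simple comodule this is its
coefficient coalgebra. -/
def coeffSpace {V : Type u} [AddCommGroup V] [Module k V]
    (ρ : V →ₗ[k] V ⊗[k] C) : Submodule k C :=
  sInf {D : Submodule k C | ∀ v : V, ρ v ∈ LinearMap.range ((D.subtype).lTensor V)}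

/-- Corestriction of a coaction along a linear map of coalgebras `π : C → D`. -/
noncomputable def cores {D : Type u} [AddCommGroup D] [Module k D]
    {V : Type u} [AddCommGroup V] [Module k V]
    (π : C →ₗ[k] D) (ρ : V →ₗ[k] V ⊗[k] C) : V →ₗ[k] V ⊗[k] D :=
  (π.lTensor V) ∘ₗ ρ

end Coalg

section Bialg

variable (H : Type u) [Ring H] [Bialgebra k H]

/-- An invariant vector for a coaction of a bialgebra. -/
def IsInvariant {V : Type u} [AddCommGroup V] [Module k V]
    (ρ : V →ₗ[k] V ⊗[k] H) (v : V) : Prop :=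
  ρ v = v ⊗ₜ[k] (1 : H)

/-- The tensor product coaction on `V ⊗ W` for a bialgebra `H`:
`v ⊗ w ↦ (v₀ ⊗ w₀) ⊗ v₁w₁`. -/
noncomputable def tensorCoact {V W : Type u}
    [AddCommGroup V] [Module k V] [AddCommGroup W] [Module k W]
    (ρV : V →ₗ[k] V ⊗[k] H) (ρW : W →ₗ[k] W ⊗[k] H) :
    (V ⊗[k] W) →ₗ[k] (V ⊗[k] W) ⊗[k] H :=
  ((LinearMap.mul' k H).lTensor (V ⊗[k] W)) ∘ₗ
    (TensorProduct.tensorTensorTensorComm k V H W H).toLinearMap ∘ₗ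
    (TensorProduct.map ρV ρW)

/-- `O(G/H)`: the right coinvariants `{x | (id ⊗ π)Δ(x) = x ⊗ 1}` of a
quotient map `π`. -/
noncomputable def quotientSpaceLeft {B : Type u} [AddCommGroup B] [Module k B] [One B]
    (π : H →ₗ[k] B) : Submodule k H :=
  LinearMap.ker ((π.lTensor H) ∘ₗ (Coalgebra.comul (R := k) (A := H)) -
    (TensorProduct.mk k H B).flip 1)

/-- `O(H\G)`: the left coinvariants `{x | (π ⊗ id)Δ(x) = 1 ⊗ x}`. -/
noncomputable def quotientSpaceRight {B : Type u} [AddCommGroup B] [Module k B] [One B]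
    (π : H →ₗ[k] B) : Submodule k H :=
  LinearMap.ker ((π.rTensor H) ∘ₗ (Coalgebra.comul (R := k) (A := H)) -
    (TensorProduct.mk k B H) 1)

end Bialg

section Hopf

variable (H : Type u) [Ring H] [HopfAlgebra k H]

/-- Iterated comultiplication `x ↦ x₁ ⊗ (x₂ ⊗ x₃)`. -/
noncomputable def comul2 : H →ₗ[k] H ⊗[k] (H ⊗[k] H) :=
  ((Coalgebra.comul (R := k) (A := H)).lTensor H) ∘ₗ (Coalgebra.comul (R := k) (A := H))

/-- The right adjoint coaction `x ↦ x₂ ⊗ S(x₁)x₃`. -/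
noncomputable def adR : H →ₗ[k] H ⊗[k] H :=
  ((LinearMap.mul' k H).lTensor H) ∘ₗ
    (TensorProduct.assoc k H H H).toLinearMap ∘ₗ
    (((TensorProduct.comm k H H).toLinearMap).rTensor H) ∘ₗ
    (TensorProduct.assoc k H H H).symm.toLinearMap ∘ₗ
    ((HopfAlgebra.antipode (R := k) (A := H)).rTensor (H ⊗[k] H)) ∘ₗ
    comul2 k H

/-- The left adjoint coaction `x ↦ x₁S(x₃) ⊗ x₂` (a left coaction, with the
coacting tensorand on the left). -/
noncomputable def adL : H →ₗ[k] H ⊗[k] H :=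
  ((LinearMap.mul' k H).rTensor H) ∘ₗ
    (TensorProduct.assoc k H H H).symm.toLinearMap ∘ₗ
    (((TensorProduct.comm k H H).toLinearMap).lTensor H) ∘ₗ
    (((HopfAlgebra.antipode (R := k) (A := H)).lTensor H).lTensor H) ∘ₗ
    comul2 k H

variable {B : Type u} [AddCommGroup B] [Module k B]

/-- `π : O(G) → O(H)` is right-normal: it is a morphism of right
`O(G)`-comodules for the right adjoint coaction, i.e. the right adjoint
coaction descends along `π`. -/
def IsRightNormal (π : H →ₗ[k] B) : Prop :=
  ∃ ρ : B →ₗ[k] B ⊗[k] H, ρ ∘ₗ π = (π.rTensor H) ∘ₗ adR k H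

/-- `π : O(G) → O(H)` is left-normal: the left adjoint coaction descends
along `π`. -/
def IsLeftNormal (π : H →ₗ[k] B) : Prop :=
  ∃ lam : B →ₗ[k] H ⊗[k] B, lam ∘ₗ π = (π.lTensor H) ∘ₗ adL k H

end Hopf

end QG

namespace QG

variable (k : Type u) [Field k]

section Coalg2

variable (C : Type u) [AddCommGroup C] [Module k C] [Coalgebra k C]

/-- A bundled simple right `C`-comodule. -/
structure SimpleComodule where
  V : Type u
  [addCommGroup : AddCommGroup V]
  [module : Module k V]
  ρ : V →ₗ[k] V ⊗[k] C
  isComod : IsComod k C ρ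
  isSimple : IsSimpleComod k C ρ

attribute [instance] SimpleComodule.addCommGroup SimpleComodule.module

/-- A simple comodule `(T, ρT)` is a constituent of a comodule `(V, ρV)`
(over a cosemisimple coalgebra) iff there is a nonzero comodule map `T → V`. -/
def IsConstituent {T V : Type u} [AddCommGroup T] [Module k T]
    [AddCommGroup V] [Module k V]
    (ρT : T →ₗ[k] T ⊗[k] C) (ρV : V →ₗ[k] V ⊗[k] C) : Prop :=
  ∃ f : T →ₗ[k] V, f ≠ 0 ∧ IsComodHom k C ρT ρV f

/-- Isomorphism of (simple) comodules. -/
def comodIsoRel (X Y : SimpleComodule k C) : Prop :=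
  ∃ e : X.V ≃ₗ[k] Y.V, IsComodHom k C X.ρ Y.ρ e.toLinearMap

/-- The set `Ĉ` of isomorphism classes of simple right `C`-comodules. -/
def SimpleComodQuot := Quot (comodIsoRel k C)

/-- The isomorphism class of a simple comodule. -/
def SimpleComodule.cls (X : SimpleComodule k C) : SimpleComodQuot k C :=
  Quot.mk _ X

/-- Group-like elements of a coalgebra; these correspond to the
one-dimensional comodules, i.e. to characters. -/
def IsGroupLike (a : C) : Prop :=
  Coalgebra.counit (R := k) (A := C) a = (1 : k) ∧
    Coalgebra.comul (R := k) (A := C) a = a ⊗ₜ[k] a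

/-- A linear map `φ : C → Z` out of a coalgebra is central if
`φ(x₁) ⊗ x₂ = φ(x₂) ⊗ x₁`. -/
def IsCentralMap {Z : Type u} [AddCommGroup Z] [Module k Z] (φ : C →ₗ[k] Z) : Prop :=
  (φ.rTensor C) ∘ₗ (Coalgebra.comul (R := k) (A := C)) =
    (φ.rTensor C) ∘ₗ (TensorProduct.comm k C C).toLinearMap ∘ₗ
      (Coalgebra.comul (R := k) (A := C))

/-- The simple comodule `X` has "central character" `g` with respect to the
quotient map `γ : C → Z`: corestricted along `γ`, the coaction on `X` is a sum
of copies of the character `g`. -/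
def HasCentralChar {Z : Type u} [AddCommGroup Z] [Module k Z]
    (γ : C →ₗ[k] Z) (X : SimpleComodule k C) (g : Z) : Prop :=
  ∀ v : X.V, cores k C γ X.ρ v = v ⊗ₜ[k] g

end Coalg2

/-- The k-span of the set of products `g * a`, `a ∈ Am`; for `Am` a submodule
this is the left ideal generated by `Am`. -/
def leftIdealGen {G : Type u} [Ring G] [Module k G] (Am : Submodule k G) :
    Submodule k G :=
  Submodule.span k {x : G | ∃ g : G, ∃ a ∈ Am, x = g * a}

end QG

set_option linter.unusedSectionVars false
set_option linter.unusedSimpArgs false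

namespace QGP
open Coalgebra

section conv
variable {k : Type u} [Field k] {C : Type u} [AddCommGroup C] [Module k C] [Coalgebra k C]
  {R : Type u} [Ring R] [Algebra k R]

/-- convolution product -/
noncomputable def cv (α β : C →ₗ[k] R) : C →ₗ[k] R :=
  LinearMap.mul' k R ∘ₗ TensorProduct.map α β ∘ₗ comul

infixl:70 "⨳" => cv

/-- convolution unit -/
noncomputable def ce (k C R : Type u) [Field k] [AddCommGroup C] [Module k C] [Coalgebra k C]
  [Ring R] [Algebra k R] : C →ₗ[k] R := Algebra.linearMap k R ∘ₗ counit

theorem toConv_cv (α β : C →ₗ[k] R) :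
    WithConv.toConv (α ⨳ β) = WithConv.toConv α * WithConv.toConv β := rfl

theorem toConv_ce : WithConv.toConv (ce k C R) = 1 := rfl

theorem cv_apply (α β : C →ₗ[k] R) (c : C) :
    (α ⨳ β) c = LinearMap.mul' k R (TensorProduct.map α β (comul c)) := rfl

theorem cv_sum (α β : C →ₗ[k] R) (c : C) {ι : Type*} (r : Coalgebra.Repr k c ι) :
    (α ⨳ β) c = ∑ i ∈ r.index, α (r.left i) * β (r.right i) := by
  rw [cv_apply, ← r.eq]; simp

theorem cv_assoc (α β γ : C →ₗ[k] R) : α ⨳ β ⨳ γ = α ⨳ (β ⨳ γ) := by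
  apply WithConv.toConv_injective
  simp only [toConv_cv, mul_assoc]

theorem ce_cv (α : C →ₗ[k] R) : ce k C R ⨳ α = α := by
  apply WithConv.toConv_injective
  simp only [toConv_cv, toConv_ce, one_mul]

theorem cv_ce (α : C →ₗ[k] R) : α ⨳ ce k C R = α := by
  apply WithConv.toConv_injective
  simp only [toConv_cv, toConv_ce, mul_one]

theorem sub_cv (α β γ : C →ₗ[k] R) : (α - β) ⨳ γ = α ⨳ γ - β ⨳ γ := by
  apply WithConv.toConv_injective
  simp only [toConv_cv, WithConv.toConv_sub, sub_mul]

theorem add_cv (α β γ : C →ₗ[k] R) : (α + β) ⨳ γ = α ⨳ γ + β ⨳ γ := by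
  apply WithConv.toConv_injective
  simp only [toConv_cv, WithConv.toConv_add, add_mul]

theorem cv_add (α β γ : C →ₗ[k] R) : α ⨳ (β + γ) = α ⨳ β + α ⨳ γ := by
  apply WithConv.toConv_injective
  simp only [toConv_cv, WithConv.toConv_add, mul_add]

theorem smul_cv (a : k) (β γ : C →ₗ[k] R) : (a • β) ⨳ γ = a • (β ⨳ γ) := by
  ext c; simp [cv_apply, TensorProduct.map_smul_left]

theorem cv_smul (a : k) (β γ : C →ₗ[k] R) : β ⨳ (a • γ) = a • (β ⨳ γ) := by
  ext c; simp [cv_apply, TensorProduct.map_smul_right]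

theorem ce_apply (c : C) : ce k C R c = algebraMap k R (counit c) := rfl

theorem ce_k : ce k C k = counit := by ext c; simp [ce_apply]

theorem alg_cv {R' : Type u} [Ring R'] [Algebra k R'] (F : R →ₐ[k] R') (α β : C →ₗ[k] R) :
    F.toLinearMap ∘ₗ (α ⨳ β) = (F.toLinearMap ∘ₗ α) ⨳ (F.toLinearMap ∘ₗ β) := by
  ext c
  simp only [LinearMap.comp_apply, cv_sum _ _ c (ℛ k c)]
  simp

theorem alg_ce {R' : Type u} [Ring R'] [Algebra k R'] (F : R →ₐ[k] R')  :
    F.toLinearMap ∘ₗ (ce k C R) = ce k C R' := by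
  ext c
  simp [ce_apply]

theorem cv_coalg {D : Type u} [AddCommGroup D] [Module k D] [Coalgebra k D] (F : D →ₗc[k] C)
    (α β : C →ₗ[k] R) :
    (α ⨳ β) ∘ₗ F.toLinearMap = (α ∘ₗ F.toLinearMap) ⨳ (β ∘ₗ F.toLinearMap) := by
  ext c
  simp only [LinearMap.comp_apply, cv_apply]
  have := CoalgHomClass.map_comp_comul_apply F c
  change _ = LinearMap.mul' k R (TensorProduct.map (α ∘ₗ F.toLinearMap) (β ∘ₗ F.toLinearMap) (comul c))
  change LinearMap.mul' k R (TensorProduct.map α β (comul (F c))) = _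
  rw [← this, TensorProduct.map_comp]
  rfl

theorem ce_coalg {D : Type u} [AddCommGroup D] [Module k D] [Coalgebra k D] (F : D →ₗc[k] C) :
    (ce k C R) ∘ₗ F.toLinearMap = ce k D R := by
  ext c
  simp [ce_apply]

end conv

section ev
variable {k : Type u} [Field k] {V C : Type u} [AddCommGroup V] [Module k V]
  [AddCommGroup C] [Module k C]

/-- evaluate a functional on the right leg -/
noncomputable def ev (ψ : C →ₗ[k] k) : V ⊗[k] C →ₗ[k] V :=
  (TensorProduct.rid k V).toLinearMap ∘ₗ ψ.lTensor V

@[simp] theorem ev_tmul (ψ : C →ₗ[k] k) (v : V) (c : C) : ev ψ (v ⊗ₜ[k] c) = ψ c • v := by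
  simp [ev]

/-- evaluate a functional on the left leg -/
noncomputable def evl (ψ : V →ₗ[k] k) : V ⊗[k] C →ₗ[k] C :=
  (TensorProduct.lid k C).toLinearMap ∘ₗ ψ.rTensor C

@[simp] theorem evl_tmul (ψ : V →ₗ[k] k) (v : V) (c : C) : evl ψ (v ⊗ₜ[k] c) = ψ v • c := by
  simp [evl]

theorem ev_add (ψ φ : C →ₗ[k] k) (z : V ⊗[k] C) : ev (ψ + φ) z = ev ψ z + ev φ z := by
  induction z with
  | zero => simp
  | tmul x y => simp [add_smul]
  | add x y hx hy => simp only [map_add, hx, hy]; abel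

theorem ev_smul (a : k) (φ : C →ₗ[k] k) (z : V ⊗[k] C) : ev (a • φ) z = a • ev φ z := by
  induction z with
  | zero => simp
  | tmul x y => simp [mul_smul]
  | add x y hx hy => simp only [map_add, hx, hy, smul_add]

theorem ev_sep {z z' : V ⊗[k] C} (h : ∀ ψ : C →ₗ[k] k, ev ψ z = ev ψ z') : z = z' := by
  classical
  let b := Module.Basis.ofVectorSpace k C
  apply (TensorProduct.equivFinsuppOfBasisRight (M := V) b).injective
  ext i
  rw [TensorProduct.equivFinsuppOfBasisRight_apply, TensorProduct.equivFinsuppOfBasisRight_apply]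
  exact h (b.coord i)

theorem ev_sep2 {z z' : V ⊗[k] C} (h : ∀ (φ : V →ₗ[k] k) (ψ : C →ₗ[k] k),
    φ (ev ψ z) = φ (ev ψ z')) : z = z' := by
  refine ev_sep fun ψ => ?_
  rw [← sub_eq_zero, ← Module.forall_dual_apply_eq_zero_iff k]
  intro φ
  rw [map_sub, h, sub_self]

theorem ev_evl (φ : V →ₗ[k] k) (ψ : C →ₗ[k] k) (z : V ⊗[k] C) : φ (ev ψ z) = ψ (evl φ z) := by
  induction z with
  | zero => simp
  | tmul x y => simp [mul_comm]
  | add x y hx hy => simp only [map_add, hx, hy]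

theorem ev_rTensor {V' : Type u} [AddCommGroup V'] [Module k V'] (g : V →ₗ[k] V')
   (ψ : C →ₗ[k] k) (z : V ⊗[k] C) : ev ψ (g.rTensor C z) = g (ev ψ z) := by
  induction z with
  | zero => simp
  | tmul x y => simp
  | add x y hx hy => simp only [map_add, hx, hy]

theorem ev_lTensor {C' : Type u} [AddCommGroup C'] [Module k C'] (g : C →ₗ[k] C')
   (ψ : C' →ₗ[k] k) (z : V ⊗[k] C) : ev ψ (g.lTensor V z) = ev (ψ ∘ₗ g) z := by
  induction z with
  | zero => simp
  | tmul x y => simp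
  | add x y hx hy => simp only [map_add, hx, hy]

end ev

section comod
variable {k : Type u} [Field k] {C : Type u} [AddCommGroup C] [Module k C] [Coalgebra k C]
  {V : Type u} [AddCommGroup V] [Module k V]

/-- the action of functionals -/
noncomputable def T (ρ : V →ₗ[k] V ⊗[k] C) (ψ : C →ₗ[k] k) : V →ₗ[k] V := ev ψ ∘ₗ ρ

/-- the action of functionals, bundled -/
noncomputable def Tl (ρ : V →ₗ[k] V ⊗[k] C) : (C →ₗ[k] k) →ₗ[k] (V →ₗ[k] V) where
  toFun ψ := T ρ ψ
  map_add' ψ φ := by ext v; simp [T, ev_add]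
  map_smul' a φ := by ext v; simp [T, ev_smul]

@[simp] theorem Tl_apply (ρ : V →ₗ[k] V ⊗[k] C) (ψ : C →ₗ[k] k) : Tl ρ ψ = T ρ ψ := rfl

theorem T_apply (ρ : V →ₗ[k] V ⊗[k] C) (ψ : C →ₗ[k] k) (v : V) : T ρ ψ v = ev ψ (ρ v) := rfl

variable {R : Type u} [Ring R] [Algebra k R]

/-- `v ⊗ r ↦ v₀ ⊗ α(v₁) r` -/
noncomputable def Om (ρ : V →ₗ[k] V ⊗[k] C) (α : C →ₗ[k] R) : V ⊗[k] R →ₗ[k] V ⊗[k] R :=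
  (LinearMap.mul' k R).lTensor V ∘ₗ (TensorProduct.assoc k V R R).toLinearMap ∘ₗ
    (α.lTensor V ∘ₗ ρ).rTensor R

theorem Om_tmul (ρ : V →ₗ[k] V ⊗[k] C) (α : C →ₗ[k] R) (v : V) (r : R) :
    Om ρ α (v ⊗ₜ r) = (LinearMap.mulRight k r ∘ₗ α).lTensor V (ρ v) := by
  simp only [Om, LinearMap.comp_apply, LinearMap.rTensor_tmul, LinearEquiv.coe_coe]
  generalize ρ v = z
  induction z with
  | zero => simp
  | tmul x y => simp
  | add x y hx hy => simp only [map_add, TensorProduct.add_tmul, hx, hy]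

theorem Om_cv {ρ : V →ₗ[k] V ⊗[k] C} (hρ : QG.IsComod k C ρ) (α β : C →ₗ[k] R) :
    Om ρ (α ⨳ β) = Om ρ α ∘ₗ Om ρ β := by
  ext v r
  have h := hρ.coassoc v
  let G : (V ⊗[k] C) ⊗[k] C →ₗ[k] V ⊗[k] R :=
    (LinearMap.mulRight k r ∘ₗ LinearMap.mul' k R ∘ₗ TensorProduct.map α β).lTensor V ∘ₗ
      (TensorProduct.assoc k V C C).toLinearMap
  have h1 : ∀ z, G ((TensorProduct.assoc k V C C).symm.toLinearMap
      ((Coalgebra.comul (R := k) (A := C)).lTensor V z)) =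
      (LinearMap.mulRight k r ∘ₗ (α ⨳ β)).lTensor V z := by
    intro z
    simp only [G, LinearMap.comp_apply, LinearEquiv.coe_coe, LinearEquiv.apply_symm_apply]
    rw [← LinearMap.comp_apply, ← LinearMap.lTensor_comp]
    rfl
  have h2 : ∀ z, G (ρ.rTensor C z) = Om ρ α ((LinearMap.mulRight k r ∘ₗ β).lTensor V z) := by
    intro z
    induction z with
    | zero => simp
    | tmul x y =>
      simp only [LinearMap.rTensor_tmul, LinearMap.lTensor_tmul, Om_tmul]
      generalize ρ x = z
      induction z with
      | zero => simp
      | tmul x y => simp [G, mul_assoc]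
      | add x y hx hy => simp only [map_add, TensorProduct.add_tmul, hx, hy]
    | add x y hx hy => simp only [map_add, hx, hy]
  have h3 := congrArg G h
  rw [h1, h2] at h3
  simp only [TensorProduct.AlgebraTensorModule.curry_apply, TensorProduct.curry_apply,
    LinearMap.restrictScalars_apply, LinearMap.coe_comp, Function.comp_apply, 
    LinearMap.restrictScalars_self]
  rw [Om_tmul, Om_tmul, h3]

theorem Om_ce {ρ : V →ₗ[k] V ⊗[k] C} (hρ : QG.IsComod k C ρ) :
    Om ρ (ce k C R) = LinearMap.id := by
  ext v r
  simp only [TensorProduct.AlgebraTensorModule.curry_apply, TensorProduct.curry_apply,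
    LinearMap.restrictScalars_apply, LinearMap.id_apply,
    LinearMap.restrictScalars_self]
  rw [Om_tmul]
  conv_rhs => rw [← hρ.counit v]
  generalize ρ v = z
  induction z with
  | zero => simp
  | tmul x y => simp [ce_apply, TensorProduct.smul_tmul, Algebra.smul_def]
  | add x y hx hy => simp only [map_add, TensorProduct.add_tmul, hx, hy]

theorem T_eq_Om (ρ : V →ₗ[k] V ⊗[k] C) (ψ : C →ₗ[k] k) (v : V) :
    Om ρ ψ (v ⊗ₜ 1) = T ρ ψ v ⊗ₜ 1 := by
  rw [Om_tmul, T_apply]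
  generalize ρ v = z
  induction z with
  | zero => simp
  | tmul x y => simp [TensorProduct.smul_tmul]
  | add x y hx hy => simp only [map_add, TensorProduct.add_tmul, hx, hy]

theorem T_cv {ρ : V →ₗ[k] V ⊗[k] C} (hρ : QG.IsComod k C ρ) (ψ φ : C →ₗ[k] k) :
    T ρ (ψ ⨳ φ) = T ρ ψ ∘ₗ T ρ φ := by
  ext v
  apply (TensorProduct.rid k V).symm.injective
  simp only [TensorProduct.rid_symm_apply, LinearMap.comp_apply, ← T_eq_Om, Om_cv hρ]

theorem T_counit {ρ : V →ₗ[k] V ⊗[k] C} (hρ : QG.IsComod k C ρ) :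
    T ρ counit = LinearMap.id := by
  ext v
  exact hρ.counit v

variable (k C) in
theorem comul_isComod : QG.IsComod k C (comul (R := k) (A := C)) where
  coassoc v := by
    rw [LinearEquiv.coe_coe, LinearEquiv.eq_symm_apply]
    exact coassoc_apply v
  counit v := by simp

/-- right translation -/
noncomputable abbrev Rt (ψ : C →ₗ[k] k) : C →ₗ[k] C := T comul ψ
/-- left translation -/
noncomputable def Lt (ψ : C →ₗ[k] k) : C →ₗ[k] C := evl ψ ∘ₗ comul

theorem app_Rt (φ ψ : C →ₗ[k] k) (c : C) : φ (Rt ψ c) = (φ ⨳ ψ) c := by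
  rw [T_apply, cv_apply]
  generalize comul (R := k) c = z
  induction z with
  | zero => simp
  | tmul x y => simp [mul_comm]
  | add x y hx hy => simp only [map_add, hx, hy]

theorem app_Lt (φ ψ : C →ₗ[k] k) (c : C) : φ (Lt ψ c) = (ψ ⨳ φ) c := by
  rw [Lt, LinearMap.comp_apply, cv_apply]
  generalize comul (R := k) c = z
  induction z with
  | zero => simp
  | tmul x y => simp
  | add x y hx hy => simp only [map_add, hx, hy]

theorem dual_ext {x y : V} (h : ∀ φ : V →ₗ[k] k, φ x = φ y) : x = y := by
  rw [← sub_eq_zero, ← Module.forall_dual_apply_eq_zero_iff k]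
  intro φ
  rw [map_sub, h, sub_self]

theorem comul_sep {c : C} {z : C ⊗[k] C}
    (h : ∀ φ ψ : C →ₗ[k] k, (φ ⨳ ψ) c = φ (ev ψ z)) : comul c = z :=
  ev_sep2 fun φ ψ => by rw [← h, ← app_Rt]; rfl

theorem Rt_counit : Rt (counit (R := k) (A := C)) = LinearMap.id := T_counit (comul_isComod k C)

theorem Rt_Lt (φ ψ : C →ₗ[k] k) (c : C) : Rt φ (Lt ψ c) = Lt ψ (Rt φ c) :=
  dual_ext fun θ => by rw [app_Rt, app_Lt, app_Lt, app_Rt, cv_assoc]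

/-- stability under all T -/
def Stab (ρ : V →ₗ[k] V ⊗[k] C) (U : Submodule k V) : Prop := ∀ ψ, ∀ u ∈ U, T ρ ψ u ∈ U

theorem Stab_iff (ρ : V →ₗ[k] V ⊗[k] C) (U : Submodule k V) :
    QG.IsSubcomod k C ρ U ↔ Stab ρ U := by
  constructor
  · intro h ψ u hu
    obtain ⟨t, ht⟩ := h u hu
    rw [T_apply, ← ht, ev_rTensor]
    exact Subtype.prop _
  · intro h u hu
    obtain ⟨q, hq⟩ := U.subtype.exists_leftInverse_of_injective (Submodule.ker_subtype U)
    refine ⟨q.rTensor C (ρ u), ?_⟩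
    refine ev_sep fun ψ => ?_
    rw [ev_rTensor, ev_rTensor]
    have := LinearMap.congr_fun hq ⟨T ρ ψ u, h ψ u hu⟩
    exact congrArg Subtype.val this

theorem mem_orb {ρ : V →ₗ[k] V ⊗[k] C} (hρ : QG.IsComod k C ρ) (v : V) :
    v ∈ LinearMap.range ((Tl ρ).flip v) := ⟨counit, by simp [T_counit hρ]⟩

theorem stab_orb {ρ : V →ₗ[k] V ⊗[k] C} (hρ : QG.IsComod k C ρ) (v : V) :
    Stab ρ (LinearMap.range ((Tl ρ).flip v)) := by
  rintro ψ _ ⟨φ, rfl⟩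
  exact ⟨ψ ⨳ φ, by simp [T_cv hρ]⟩

theorem fin_orb (ρ : V →ₗ[k] V ⊗[k] C) (v : V) :
    Module.Finite k (LinearMap.range ((Tl ρ).flip v)) := by
  have : ∀ z : V ⊗[k] C, ∃ F : Submodule k V, Module.Finite k F ∧ ∀ ψ, ev ψ z ∈ F := by
    intro z
    induction z with
    | zero => exact ⟨⊥, inferInstance, by simp⟩
    | tmul x y => 
      exact ⟨k ∙ x, inferInstance, fun ψ => by
        rw [ev_tmul]; exact Submodule.smul_mem _ _ (Submodule.mem_span_singleton_self x)⟩
    | add x y hx hy => 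
      obtain ⟨F, hF, h⟩ := hx
      obtain ⟨F', hF', h'⟩ := hy
      exact ⟨F ⊔ F', inferInstance, fun ψ => by
        rw [map_add]; exact Submodule.add_mem_sup (h ψ) (h' ψ)⟩
  obtain ⟨F, hF, h⟩ := this (ρ v)
  exact Submodule.finiteDimensional_of_le (S₂ := F) (by rintro _ ⟨ψ, rfl⟩; exact h ψ)

end comod
end QGP

set_option linter.unusedSectionVars false
set_option linter.unusedSimpArgs false
set_option linter.unusedVariables false

namespace QGP
open Coalgebra

section ss
variable {k : Type u} [Field k] {C : Type u} [AddCommGroup C] [Module k C] [Coalgebra k C]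
  {V : Type u} [AddCommGroup V] [Module k V]

/-- algebra generated by the action -/
noncomputable abbrev EE (ρ : V →ₗ[k] V ⊗[k] C) : Subalgebra k (Module.End k V) :=
  Algebra.adjoin k (Set.range (T ρ))

/-- stable subspaces as submodules -/
noncomputable def ofStab (ρ : V →ₗ[k] V ⊗[k] C) (U : Submodule k V) (h : Stab ρ U) :
    Submodule (EE ρ) V where
  carrier := U
  add_mem' := U.add_mem
  zero_mem' := U.zero_mem
  smul_mem' := by
    rintro ⟨c, hc⟩ x hx
    change c x ∈ U
    induction hc using Algebra.adjoin_induction generalizing x with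
    | mem c hc => obtain ⟨ψ, rfl⟩ := hc; exact h ψ x hx
    | algebraMap r => exact U.smul_mem r hx
    | add a b _ _ ha hb => exact U.add_mem (ha hx) (hb hx)
    | mul a b _ _ ha hb => exact ha (hb hx)

theorem mem_ofStab {ρ : V →ₗ[k] V ⊗[k] C} {U : Submodule k V} {h : Stab ρ U} {x : V} :
    x ∈ ofStab ρ U h ↔ x ∈ U := Iff.rfl

theorem stab_restr (ρ : V →ₗ[k] V ⊗[k] C) (N : Submodule (EE ρ) V) :
    Stab ρ (N.restrictScalars k) := fun ψ u hu =>
  N.smul_mem (⟨T ρ ψ, Algebra.subset_adjoin ⟨ψ, rfl⟩⟩ : EE ρ) hu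

theorem simple_iff (ρ : V →ₗ[k] V ⊗[k] C) (N : Submodule (EE ρ) V) :
    QG.IsSimpleSubcomod k C ρ (N.restrictScalars k) ↔ IsSimpleModule (EE ρ) N := by
  rw [isSimpleModule_iff_isAtom]
  constructor
  · rintro ⟨_, h1, h2⟩
    refine ⟨fun h => h1 (by rw [h]; rfl), fun M hM => ?_⟩
    rcases h2 (M.restrictScalars k) hM.le ((Stab_iff _ _).2 (stab_restr ρ M)) with h | h
    · exact Submodule.restrictScalars_injective k _ _ h
    · exact absurd (Submodule.restrictScalars_injective k _ _ h) hM.ne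
  · rintro h
    refine ⟨(Stab_iff _ _).2 (stab_restr ρ N), 
      fun h' => h.1 (Submodule.restrictScalars_injective k (EE ρ) V h'), fun M hM hs => ?_⟩
    rcases h.le_iff.1 (show ofStab ρ M ((Stab_iff _ _).1 hs) ≤ N from hM) with h | h
    · left; ext x; rw [← mem_ofStab (h := (Stab_iff _ _).1 hs), h]; rfl
    · right; ext x; rw [← mem_ofStab (h := (Stab_iff _ _).1 hs), h]; rfl

theorem compl_of_css {ρ : V →ₗ[k] V ⊗[k] C} 
    (h : ∃ (ι : Type u) (U : ι → Submodule k V),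
      (∀ i, QG.IsSimpleSubcomod k C ρ (U i)) ∧ iSupIndep U ∧ (⨆ i, U i) = ⊤)
    (U : Submodule k V) (hU : Stab ρ U) : ∃ P, Stab ρ P ∧ IsCompl U P := by
  obtain ⟨ι, W, hW, -, ht⟩ := h
  have hs : IsSemisimpleModule (EE ρ) V := by
    rw [← sSup_simples_eq_top_iff_isSemisimpleModule]
    rw [eq_top_iff]
    have : ∀ i, ofStab ρ (W i) ((Stab_iff _ _).1 (hW i).1) ≤
       sSup {m : Submodule (EE ρ) V | IsSimpleModule (EE ρ) m} := fun i =>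
      le_sSup ((simple_iff ρ (ofStab ρ (W i) ((Stab_iff _ _).1 (hW i).1))).1 (hW i))
    have h2 : (⨆ i, W i) ≤ 
      (sSup {m : Submodule (EE ρ) V | IsSimpleModule (EE ρ) m}).restrictScalars k :=
      iSup_le this
    rw [ht] at h2
    exact fun x _ => h2 trivial
  obtain ⟨P, hP⟩ := exists_isCompl (ofStab ρ U hU)
  refine ⟨P.restrictScalars k, stab_restr ρ P, ?_⟩
  rw [isCompl_iff, Submodule.disjoint_def, codisjoint_iff, Submodule.eq_top_iff'] at hP ⊢
  refine ⟨hP.1, fun x => ?_⟩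
  have := hP.2 x
  rw [Submodule.mem_sup] at this ⊢
  exact this

theorem css_of_compl {ρ : V →ₗ[k] V ⊗[k] C} 
    (h : ∀ U : Submodule k V, Stab ρ U → ∃ P, Stab ρ P ∧ IsCompl U P) :
    ∃ (ι : Type u) (U : ι → Submodule k V),
      (∀ i, QG.IsSimpleSubcomod k C ρ (U i)) ∧ iSupIndep U ∧ (⨆ i, U i) = ⊤ := by
  have hs : IsSemisimpleModule (EE ρ) V := by
    rw [isSemisimpleModule_iff]
    refine ⟨fun N => ?_⟩
    obtain ⟨P, hP, hc⟩ := h _ (stab_restr ρ N)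
    refine ⟨ofStab ρ P hP, ?_⟩
    rw [isCompl_iff, Submodule.disjoint_def, codisjoint_iff, Submodule.eq_top_iff'] at hc ⊢
    refine ⟨hc.1, fun x => ?_⟩
    have := hc.2 x
    rw [Submodule.mem_sup] at this ⊢
    exact this
  obtain ⟨s, h1, h2, h3⟩ := IsSemisimpleModule.exists_sSupIndep_sSup_simples_eq_top (EE ρ) V
  refine ⟨s, fun i => (i : Submodule (EE ρ) V).restrictScalars k, fun i => ?_, ?_, ?_⟩
  · exact (simple_iff ρ _).2 (h3 i i.2)
  · have h4 := (sSupIndep_iff _).1 h1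
    intro i
    have := h4 i
    rw [Submodule.disjoint_def] at this ⊢
    intro x hx hx'
    refine this x hx ?_
    have e := map_iSup₂ (Submodule.restrictScalarsLatticeHom k (EE ρ) V) 
      (fun (j : s) (_ : j ≠ i) => (j : Submodule (EE ρ) V))
    have := (SetLike.ext_iff.1 e x).2 hx'
    exact this
  · have e := map_iSup (Submodule.restrictScalarsLatticeHom k (EE ρ) V) 
      (fun (j : s) => (j : Submodule (EE ρ) V))
    refine e.symm.trans ?_
    rw [← sSup_eq_iSup', h2]
    rfl

end ss
end QGP

set_option linter.unusedSectionVars false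
set_option linter.unusedSimpArgs false
set_option linter.unusedVariables false

namespace QGP
open Coalgebra HopfAlgebra

section hopf
variable {k : Type u} [Field k] {C : Type u} [Ring C] [HopfAlgebra k C]

theorem S_cv_alg {R : Type u} [Ring R] [Algebra k R] (F : C →ₐ[k] R) :
    (F.toLinearMap ∘ₗ antipode k) ⨳ F.toLinearMap = ce k C R := by
  have h : antipode k ⨳ LinearMap.id = ce k C C := by
    ext a; simpa [cv_apply, ce_apply, LinearMap.rTensor_def] using mul_antipode_rTensor_comul_apply (R := k) a
  rw [← alg_ce F, ← h, alg_cv]; rfl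

theorem alg_cv_S {R : Type u} [Ring R] [Algebra k R] (F : C →ₐ[k] R) :
    F.toLinearMap ⨳ (F.toLinearMap ∘ₗ antipode k) = ce k C R := by
  have h : LinearMap.id ⨳ antipode k = ce k C C := by
    ext a; simpa [cv_apply, ce_apply, LinearMap.lTensor_def] using mul_antipode_lTensor_comul_apply (R := k) a
  rw [← alg_ce F, ← h, alg_cv]; rfl

variable (k C) in
/-- left leg -/
noncomputable abbrev iL : C →ₐ[k] C ⊗[k] C := Algebra.TensorProduct.includeLeft
variable (k C) in
/-- right leg -/
noncomputable abbrev jR : C →ₐ[k] C ⊗[k] C := Algebra.TensorProduct.includeRight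
variable (k C) in
/-- comultiplication -/
noncomputable abbrev dl : C →ₐ[k] C ⊗[k] C := Bialgebra.comulAlgHom k C

theorem comul_eq : (dl k C).toLinearMap = (iL k C).toLinearMap ⨳ (jR k C).toLinearMap := by
  ext a
  rw [cv_sum _ _ a (ℛ k a)]
  simp [(ℛ k a).eq]

theorem comul_S : (dl k C).toLinearMap ∘ₗ antipode k =
    ((jR k C).toLinearMap ∘ₗ antipode k) ⨳ ((iL k C).toLinearMap ∘ₗ antipode k) := by
  have h1 := alg_cv_S (dl k C)
  have h2 : (((jR k C).toLinearMap ∘ₗ antipode k) ⨳ ((iL k C).toLinearMap ∘ₗ antipode k)) ⨳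
     (dl k C).toLinearMap = ce k C _ := by
    rw [comul_eq, cv_assoc, ← cv_assoc ((iL k C).toLinearMap ∘ₗ antipode k), S_cv_alg, ce_cv,
      S_cv_alg]
  rw [← ce_cv ((dl k C).toLinearMap ∘ₗ antipode k), ← h2, cv_assoc, h1, cv_ce]

theorem comul_S_apply (a : C) : comul (R := k) (antipode k a) = 
    TensorProduct.map (antipode k) (antipode k) (TensorProduct.comm k C C (comul a)) := by
  have := LinearMap.congr_fun (comul_S (k := k) (C := C)) a
  rw [cv_apply] at this
  refine this.trans ?_
  generalize comul (R := k) a = z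
  induction z with
  | zero => simp
  | tmul x y => simp
  | add x y hx hy => simp only [map_add, hx, hy]

/-- two-sided integral -/
structure IsInt (h : C →ₗ[k] k) : Prop where
  one : h 1 = 1
  right : ∀ ψ : C →ₗ[k] k, h ⨳ ψ = ψ 1 • h
  left : ∀ ψ : C →ₗ[k] k, ψ ⨳ h = ψ 1 • h

theorem cv_one_apply (ψ φ : C →ₗ[k] k) : (ψ ⨳ φ) 1 = ψ 1 * φ 1 := by
  rw [cv_apply, Bialgebra.comul_one]; simp [Algebra.TensorProduct.one_def]

theorem Rt_one (ψ : C →ₗ[k] k) : Rt ψ (1 : C) = ψ 1 • (1 : C) :=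
  dual_ext fun θ => by rw [app_Rt, cv_one_apply, map_smul, smul_eq_mul, mul_comm]

theorem exists_int (hc : ∀ U : Submodule k C, Stab comul U → ∃ P, Stab comul P ∧ IsCompl U P) :
    ∃ h : C →ₗ[k] k, IsInt h := by
  have one_ne : (1 : C) ≠ 0 := by
    intro h
    have := Bialgebra.counit_one (R := k) (A := C)
    rw [h, map_zero] at this
    exact zero_ne_one this
  obtain ⟨P, hP, hcP⟩ := hc (k ∙ (1 : C)) (by
    intro ψ u hu
    obtain ⟨a, rfl⟩ := Submodule.mem_span_singleton.1 hu
    rw [map_smul, Rt_one]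
    exact Submodule.smul_mem _ _ (Submodule.smul_mem _ _ (Submodule.mem_span_singleton_self _)))
  have h1P : (1 : C) ∉ P := fun h => one_ne
    (Submodule.disjoint_def.1 hcP.disjoint 1 (Submodule.mem_span_singleton_self _) h)
  obtain ⟨f, hf1, hf⟩ := Submodule.exists_le_ker_of_notMem h1P
  have hdec : ∀ a : C, ∃ c : k, ∃ p ∈ P, a = c • 1 + p := by
    intro a
    have : a ∈ k ∙ (1 : C) ⊔ P := by rw [hcP.sup_eq_top]; trivial
    obtain ⟨x, hx, y, hy, rfl⟩ := Submodule.mem_sup.1 this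
    obtain ⟨c, rfl⟩ := Submodule.mem_span_singleton.1 hx
    exact ⟨c, y, hy, rfl⟩
  set h : C →ₗ[k] k := (f 1)⁻¹ • f with hh
  have h1 : h 1 = 1 := by simp [hh, hf1]
  have hPz : ∀ p ∈ P, h p = 0 := fun p hp => by
    have : f p = 0 := hf hp
    simp [hh, this]
  have hr : ∀ ψ : C →ₗ[k] k, h ⨳ ψ = ψ 1 • h := by
    intro ψ
    ext a
    obtain ⟨c, p, hp, rfl⟩ := hdec a
    rw [← app_Rt, map_add, map_smul, Rt_one, map_add, hPz _ (hP ψ p hp)]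
    simp [h1, hPz p hp, mul_comm]
  have uniq : ∀ g : C →ₗ[k] k, g 1 = 0 → (∀ ψ : C →ₗ[k] k, g ⨳ ψ = ψ 1 • g) → g = 0 := by
    intro g g1 hg
    obtain ⟨L, hL, hcL⟩ := hc (LinearMap.ker g) (by
      intro ψ u hu
      rw [LinearMap.mem_ker] at hu ⊢
      rw [app_Rt, hg]; simp [hu])
    have hLl : ∀ l ∈ L, l = counit (R := k) l • (1 : C) := by
      intro l hl
      refine dual_ext (k := k) fun θ => ?_
      have h0 : Rt θ l - θ 1 • l = 0 := by
        refine Submodule.disjoint_def.1 hcL.disjoint _ ?_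
          (L.sub_mem (hL θ l hl) (L.smul_mem _ hl))
        rw [LinearMap.mem_ker, map_sub, app_Rt, hg]; simp
      have := congrArg (counit (R := k) (A := C)) h0
      rw [map_sub, app_Rt, ← ce_k, ce_cv, ce_k, map_zero, sub_eq_zero] at this
      rw [this]; simp [mul_comm]
    ext a
    have : a ∈ LinearMap.ker g ⊔ L := by rw [hcL.sup_eq_top]; trivial
    obtain ⟨x, hx, y, hy, rfl⟩ := Submodule.mem_sup.1 this
    rw [map_add, LinearMap.mem_ker.1 hx, hLl y hy]; simp [g1]
  refine ⟨h, h1, hr, fun ψ => ?_⟩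
  have := uniq (ψ ⨳ h - ψ 1 • h) (by simp [cv_one_apply, h1]) (fun θ => by
    rw [sub_cv, cv_assoc, hr, cv_smul, smul_cv, hr, smul_sub, smul_comm])
  exact sub_eq_zero.1 this

/-- the form h(x S y) -/
noncomputable def sig (h : C →ₗ[k] k) : C →ₗ[k] (C →ₗ[k] k) :=
  ((LinearMap.mul k C).flip.compr₂ h) ∘ₗ antipode k

theorem sig_apply (h : C →ₗ[k] k) (x c : C) : sig h c x = h (x * antipode k c) := rfl

theorem sig_key {h : C →ₗ[k] k} (hh : IsInt h) (ψ : C →ₗ[k] k) (c : C) :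
    ψ ⨳ sig h c = sig h (Rt ψ c) := by
  ext x
  have e : ((dl k C).toLinearMap ∘ₗ antipode k) ⨳ (iL k C).toLinearMap = 
      (jR k C).toLinearMap ∘ₗ antipode k := by
    rw [comul_S, cv_assoc, S_cv_alg, cv_ce]
  have e1 := congrArg (fun z => ψ (ev h (comul x * z))) (LinearMap.congr_fun e c)
  have hm : ∀ z : C ⊗[k] C, ∀ a : C, ev h (z * a ⊗ₜ 1) = ev h z * a := by
    intro z a
    induction z with
    | zero => simp
    | tmul x y => simp
    | add x y hx hy => simp only [map_add, add_mul, hx, hy]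
  have hi : ∀ z : C, ev h (comul z) = h z • 1 := fun z => dual_ext fun θ => by
    have := app_Rt θ h z
    rw [T_apply] at this
    rw [this, hh.left]; simp [mul_comm]
  simp only [cv_sum _ _ c (ℛ k c)] at e1
  rw [Finset.mul_sum] at e1
  simp only [LinearMap.comp_apply, AlgHom.toLinearMap_apply, Bialgebra.comulAlgHom_apply,
     Algebra.TensorProduct.includeLeft_apply, Algebra.TensorProduct.includeRight_apply,
     ← mul_assoc, ← Bialgebra.comul_mul, map_sum, hm, hi] at e1
  have r : sig h (Rt ψ c) x = ∑ i ∈ (ℛ k c).index, 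
      ψ (h (x * antipode k ((ℛ k c).left i)) • 1 * (ℛ k c).right i) := by
    rw [sig_apply, T_apply, ← (ℛ k c).eq]
    simp [Finset.mul_sum, mul_comm]
  rw [r, e1, cv_apply]
  generalize comul (R := k) x = z
  induction z with
  | zero => simp
  | tmul x y => simp [sig_apply, mul_comm]
  | add x y hx hy => simp only [map_add, add_mul, hx, hy]

variable {V : Type u} [AddCommGroup V] [Module k V]

theorem rho_T {ρ : V →ₗ[k] V ⊗[k] C} (hρ : QG.IsComod k C ρ) (ψ : C →ₗ[k] k) (v : V) :
    ρ (T ρ ψ v) = (Rt ψ).lTensor V (ρ v) := by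
  refine ev_sep fun φ => ?_
  rw [ev_lTensor, ← T_apply]
  have : φ ∘ₗ Rt ψ = φ ⨳ ψ := by ext c; exact app_Rt φ ψ c
  rw [this, ← T_apply, T_cv hρ]; rfl

/-- averaging -/
noncomputable def Ph (h : C →ₗ[k] k) (ρ : V →ₗ[k] V ⊗[k] C) : V ⊗[k] C →ₗ[k] V :=
  TensorProduct.lift (Tl ρ ∘ₗ sig h).flip

theorem Ph_tmul (h : C →ₗ[k] k) (ρ : V →ₗ[k] V ⊗[k] C) (v : V) (c : C) :
    Ph h ρ (v ⊗ₜ c) = T ρ (sig h c) v := rfl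

theorem T_Ph {h : C →ₗ[k] k} (hh : IsInt h) {ρ : V →ₗ[k] V ⊗[k] C} (hρ : QG.IsComod k C ρ)
   (ψ : C →ₗ[k] k) (z : V ⊗[k] C) : T ρ ψ (Ph h ρ z) = Ph h ρ ((Rt ψ).lTensor V z) := by
  induction z with
  | zero => simp
  | tmul x y => rw [LinearMap.lTensor_tmul, Ph_tmul, Ph_tmul, ← sig_key hh, T_cv hρ]; rfl
  | add x y hx hy => simp only [map_add, hx, hy]

theorem Ph_rho {h : C →ₗ[k] k} (hh : IsInt h) {ρ : V →ₗ[k] V ⊗[k] C} (hρ : QG.IsComod k C ρ)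
    (v : V) : Ph h ρ (ρ v) = v := by
  let G : (V ⊗[k] C) ⊗[k] C →ₗ[k] V :=
    ev (h ∘ₗ LinearMap.mul' k C ∘ₗ (antipode k).lTensor C) ∘ₗ
      (TensorProduct.assoc k V C C).toLinearMap
  have h1 : ∀ z, G (ρ.rTensor C z) = Ph h ρ z := by
    intro z
    induction z with
    | zero => simp
    | tmul x y =>
      rw [LinearMap.rTensor_tmul, Ph_tmul, T_apply]
      generalize ρ x = z
      induction z with
      | zero => simp
      | tmul x y => simp [G, sig_apply]
      | add x y hx hy => simp only [map_add, TensorProduct.add_tmul, hx, hy]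
    | add x y hx hy => simp only [map_add, hx, hy]
  have h2 : ∀ z, G ((TensorProduct.assoc k V C C).symm.toLinearMap
      ((Coalgebra.comul (R := k) (A := C)).lTensor V z)) = ev counit z := by
    intro z
    simp only [G, LinearMap.comp_apply, LinearEquiv.coe_coe, LinearEquiv.apply_symm_apply,
      ev_lTensor]
    congr 2
    ext c
    simp [hh.one, Algebra.algebraMap_eq_smul_one]
  rw [← h1, hρ.coassoc, h2]
  exact hρ.counit v

theorem maschke {h : C →ₗ[k] k} (hh : IsInt h) {ρ : V →ₗ[k] V ⊗[k] C} (hρ : QG.IsComod k C ρ)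
    (U : Submodule k V) (hU : Stab ρ U) :
    ∃ p : V →ₗ[k] V, (∀ ψ v, p (T ρ ψ v) = T ρ ψ (p v)) ∧ (∀ v, p v ∈ U) ∧ ∀ u ∈ U, p u = u := by
  obtain ⟨q, hq⟩ := U.subtype.exists_leftInverse_of_injective (Submodule.ker_subtype U)
  refine ⟨Ph h ρ ∘ₗ (U.subtype ∘ₗ q).rTensor C ∘ₗ ρ, fun ψ v => ?_, fun v => ?_, fun u hu => ?_⟩
  · simp only [LinearMap.comp_apply]
    rw [T_Ph hh hρ, rho_T hρ]
    congr 1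
    generalize ρ v = z
    induction z with
    | zero => simp
    | tmul x y => simp
    | add x y hx hy => simp only [map_add, hx, hy]
  · simp only [LinearMap.comp_apply]
    generalize ρ v = z
    induction z with
    | zero => simp
    | tmul x y => 
      rw [LinearMap.rTensor_tmul, Ph_tmul]
      exact hU _ _ (Subtype.prop _)
    | add x y hx hy => simp only [map_add]; exact U.add_mem hx hy
  · have : (U.subtype ∘ₗ q).rTensor C (ρ u) = ρ u := by
      refine ev_sep fun ψ => ?_
      rw [ev_rTensor]
      have := LinearMap.congr_fun hq ⟨T ρ ψ u, hU ψ u hu⟩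
      exact congrArg Subtype.val this
    simp only [LinearMap.comp_apply]
    rw [this, Ph_rho hh hρ]

theorem compl_of_int {h : C →ₗ[k] k} (hh : IsInt h) {ρ : V →ₗ[k] V ⊗[k] C} (hρ : QG.IsComod k C ρ)
    (U : Submodule k V) (hU : Stab ρ U) : ∃ P, Stab ρ P ∧ IsCompl U P := by
  obtain ⟨p, h1, h2, h3⟩ := maschke hh hρ U hU
  refine ⟨LinearMap.ker p, fun ψ u hu => ?_, ?_⟩
  · rw [LinearMap.mem_ker] at *
    rw [h1, hu, map_zero]
  · rw [isCompl_iff, Submodule.disjoint_def, codisjoint_iff, Submodule.eq_top_iff']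
    refine ⟨fun x hx hx' => by rw [← h3 x hx]; exact hx', fun x => ?_⟩
    rw [Submodule.mem_sup]
    exact ⟨p x, h2 x, x - p x, by rw [LinearMap.mem_ker, map_sub, h3 _ (h2 x), sub_self], by abel⟩

theorem css_of_int {h : C →ₗ[k] k} (hh : IsInt h) : QG.IsCosemisimple k C := by
  intro V _ _ ρ hρ
  exact css_of_compl (compl_of_int hh hρ)

theorem int_of_css (hc : QG.IsCosemisimple k C) : ∃ h : C →ₗ[k] k, IsInt h :=
  exists_int (compl_of_css (hc C comul (comul_isComod k C)))

end hopf
end QGP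

set_option linter.unusedSectionVars false
set_option linter.unusedSimpArgs false
set_option linter.unusedVariables false

namespace QGP
open Coalgebra HopfAlgebra

section sinj
variable {k : Type u} [Field k] {C : Type u} [Ring C] [HopfAlgebra k C]

theorem ev_comul_int {h : C →ₗ[k] k} (hh : IsInt h) (z : C) : ev h (comul z) = h z • (1 : C) :=
  dual_ext (k := k) fun θ => by
    have := app_Rt θ h z
    rw [T_apply] at this
    rw [this, hh.left]; simp [mul_comm]

theorem evl_comul_int {h : C →ₗ[k] k} (hh : IsInt h) (z : C) : evl h (comul z) = h z • (1 : C) :=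
  dual_ext (k := k) fun θ => by
    have := app_Lt θ h z
    rw [Lt, LinearMap.comp_apply] at this
    rw [this, hh.right]; simp [mul_comm]

theorem id_cv_S : LinearMap.id ⨳ antipode k = ce k C C := alg_cv_S (AlgHom.id k C)
theorem S_cv_id : antipode k ⨳ LinearMap.id = ce k C C := S_cv_alg (AlgHom.id k C)

theorem int_S {h : C →ₗ[k] k} (hh : IsInt h) : h ∘ₗ antipode k = h := by
  set g := h ∘ₗ antipode k with hg
  set w : C →ₗ[k] C := Algebra.linearMap k C ∘ₗ g with hw
  have e : w ⨳ antipode k = w := by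
    ext a
    have h1 := ev_comul_int hh (antipode k a)
    rw [comul_S_apply] at h1
    have : w a = h (antipode k a) • 1 := by simp [hw, hg, Algebra.algebraMap_eq_smul_one]
    rw [this, ← h1, cv_apply]
    generalize comul (R := k) a = z
    induction z with
    | zero => simp
    | tmul x y => simp [hw, hg, Algebra.algebraMap_eq_smul_one]
    | add x y hx hy => simp only [map_add, hx, hy]
  have e2 : w = w ⨳ LinearMap.id := by
    conv_rhs => rw [← e]
    rw [cv_assoc, S_cv_id, cv_ce]
  have e3 : g = g ⨳ h := by
    ext a
    have := congrArg h (LinearMap.congr_fun e2 a)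
    rw [cv_apply] at this ⊢
    rw [show h (w a) = g a by simp [hw, Algebra.algebraMap_eq_smul_one, hh.one]] at this
    rw [this]
    generalize comul (R := k) a = z
    induction z with
    | zero => simp
    | tmul x y => simp [hw, Algebra.algebraMap_eq_smul_one]
    | add x y hx hy => simp only [map_add, hx, hy]
  rw [e3, hh.left]
  simp [hg, hh.one]

theorem strong_inv {h : C →ₗ[k] k} (hh : IsInt h) (ψ : C →ₗ[k] k) (a b : C) :
    h (Rt ψ a * b) = ∑ i ∈ (ℛ k b).index, 
      ψ (h (a * (ℛ k b).left i) • 1 * antipode k ((ℛ k b).right i)) := by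
  have e : (dl k C).toLinearMap ⨳ ((jR k C).toLinearMap ∘ₗ antipode k) = 
      (iL k C).toLinearMap := by
    rw [comul_eq, cv_assoc, alg_cv_S, cv_ce]
  have e1 := congrArg (fun z => ψ (evl h (comul a * z))) (LinearMap.congr_fun e b)
  have hm : ∀ z : C ⊗[k] C, ∀ a : C, evl h (z * 1 ⊗ₜ a) = evl h z * a := by
    intro z a
    induction z with
    | zero => simp
    | tmul x y => simp
    | add x y hx hy => simp only [map_add, add_mul, hx, hy]
  simp only [cv_sum _ _ b (ℛ k b)] at e1
  rw [Finset.mul_sum] at e1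
  simp only [LinearMap.comp_apply, AlgHom.toLinearMap_apply, Bialgebra.comulAlgHom_apply,
     Algebra.TensorProduct.includeLeft_apply, Algebra.TensorProduct.includeRight_apply,
     ← mul_assoc, ← Bialgebra.comul_mul, map_sum, hm, evl_comul_int hh] at e1
  rw [e1, T_apply]
  generalize comul (R := k) a = z
  induction z with
  | zero => simp
  | tmul x y => simp [mul_comm]
  | add x y hx hy => simp only [map_add, add_mul, hx, hy]

theorem int_nondeg {h : C →ₗ[k] k} (hh : IsInt h) {a : C} (ha : ∀ b, h (a * b) = 0) : a = 0 := by
  let N : Submodule k C :=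
    { carrier := {a | ∀ b, h (a * b) = 0}
      add_mem' := fun {x y} hx hy b => by rw [add_mul, map_add, hx, hy, add_zero]
      zero_mem' := fun b => by simp
      smul_mem' := fun c x hx b => by simp [hx b] }
  have hN : Stab comul N := by
    intro ψ x hx b
    rw [strong_inv hh]
    refine Finset.sum_eq_zero fun i _ => ?_
    rw [hx]; simp
  have hε : ∀ x ∈ N, counit (R := k) x = 0 := by
    intro x hx
    obtain ⟨t, ht⟩ := (Stab_iff _ _).2 hN x hx
    have h1 := congrArg h (mul_antipode_lTensor_comul_apply (R := k) x)
    rw [← ht] at h1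
    simp only [Algebra.algebraMap_eq_smul_one, map_smul, hh.one, smul_eq_mul, mul_one] at h1
    rw [← h1]
    generalize t = t
    induction t with
    | zero => simp
    | tmul x y => simpa using x.2 _
    | add x y hx hy => simp only [map_add, hx, hy, add_zero]
  refine dual_ext (k := k) fun ψ => ?_
  have := hε _ (hN ψ a ha)
  rw [app_Rt, ← ce_k, ce_cv] at this
  rw [this, map_zero]

theorem S_inj {h : C →ₗ[k] k} (hh : IsInt h) : Function.Injective (antipode k : C →ₗ[k] C) := by
  rw [injective_iff_map_eq_zero]
  intro a ha
  refine int_nondeg hh fun b => ?_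
  rw [← int_S hh, LinearMap.comp_apply, antipode_mul_antidistrib, ha, mul_zero, map_zero]

theorem adR_eq : QG.adR k C = ((jR k C).toLinearMap ∘ₗ antipode k) ⨳ (dl k C).toLinearMap := by
  ext a
  rw [cv_apply]
  simp only [QG.adR, QG.comul2, LinearMap.comp_apply]
  generalize comul (R := k) a = z
  induction z with
  | zero => simp
  | tmul x y =>
    simp only [LinearMap.lTensor_tmul, LinearMap.rTensor_tmul, TensorProduct.map_tmul, 
      AlgHom.toLinearMap_apply, Bialgebra.comulAlgHom_apply]
    generalize comul (R := k) y = z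
    induction z with
    | zero => simp
    | tmul x y => simp
    | add x y hx hy => simp only [map_add, TensorProduct.tmul_add, hx, hy]
  | add x y hx hy => simp only [map_add, hx, hy]

theorem adL_eq' : QG.adL k C = (iL k C).toLinearMap ⨳
    ((jR k C).toLinearMap ⨳ ((iL k C).toLinearMap ∘ₗ antipode k)) := by
  ext a
  rw [cv_apply]
  simp only [QG.adL, QG.comul2, LinearMap.comp_apply]
  generalize comul (R := k) a = z
  induction z with
  | zero => simp
  | tmul x y =>
    simp only [LinearMap.lTensor_tmul, LinearMap.rTensor_tmul, TensorProduct.map_tmul, 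
      AlgHom.toLinearMap_apply, cv_apply]
    generalize comul (R := k) y = z
    induction z with
    | zero => simp
    | tmul x y => simp
    | add x y hx hy => simp only [map_add, TensorProduct.tmul_add, hx, hy]
  | add x y hx hy => simp only [map_add, hx, hy]

theorem adL_eq : QG.adL k C = (dl k C).toLinearMap ⨳ ((iL k C).toLinearMap ∘ₗ antipode k) := by
  rw [adL_eq', ← cv_assoc, ← comul_eq]

/-- flip and apply S -/
noncomputable def chi : C ⊗[k] C →ₗ[k] C ⊗[k] C := 
  TensorProduct.map (antipode k) (antipode k) ∘ₗ (TensorProduct.comm k C C).toLinearMap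

theorem chi_mul (x y : C ⊗[k] C) : chi (x * y) = chi y * chi x := by
  induction x with
  | zero => simp
  | add x x' hx hx' => simp only [map_add, add_mul, mul_add, hx, hx']
  | tmul a b =>
    induction y with
    | zero => simp
    | add x x' hx hx' => simp only [map_add, add_mul, mul_add, hx, hx']
    | tmul c d => simp [chi, antipode_mul_antidistrib]

theorem chi_comul (a : C) : chi (comul (R := k) a) = comul (antipode k a) :=
  (comul_S_apply a).symm

theorem chi_adL (a : C) : chi (QG.adL k C a) = QG.adR k C (antipode k a) := by
  rw [adL_eq, adR_eq, cv_apply, cv_apply, comul_S_apply]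
  generalize comul (R := k) a = z
  induction z with
  | zero => simp
  | tmul x y => 
    simp only [TensorProduct.map_tmul, LinearMap.mul'_apply, chi_mul, AlgHom.toLinearMap_apply,
      Bialgebra.comulAlgHom_apply, chi_comul, TensorProduct.comm_tmul]
    simp [chi]
  | add x y hx hy => simp only [map_add, hx, hy]

theorem chi_adR (a : C) : chi (QG.adR k C a) = QG.adL k C (antipode k a) := by
  rw [adL_eq, adR_eq, cv_apply, cv_apply, comul_S_apply]
  generalize comul (R := k) a = z
  induction z with
  | zero => simp
  | tmul x y => 
    simp only [TensorProduct.map_tmul, LinearMap.mul'_apply, chi_mul, AlgHom.toLinearMap_apply,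
      Bialgebra.comulAlgHom_apply, chi_comul, TensorProduct.comm_tmul]
    simp [chi]
  | add x y hx hy => simp only [map_add, hx, hy]

end sinj

section transfer
variable {k : Type u} [Field k] {A B : Type u} [Ring A] [HopfAlgebra k A] [Ring B] [HopfAlgebra k B]

/-- linear map of a bialgebra morphism -/
noncomputable abbrev lm (π : A →ₐc[k] B) : A →ₗ[k] B := (π : A →ₗ[k] B)

theorem lm_alg (π : A →ₐc[k] B) : lm π = (π : A →ₐ[k] B).toLinearMap := rfl

theorem cv_lm {R : Type u} [Ring R] [Algebra k R] (π : A →ₐc[k] B) (α β : B →ₗ[k] R) : 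
    (α ⨳ β) ∘ₗ lm π = (α ∘ₗ lm π) ⨳ (β ∘ₗ lm π) :=
  cv_coalg (π : A →ₗc[k] B) α β

theorem ce_lm {R : Type u} [Ring R] [Algebra k R] (π : A →ₐc[k] B) : 
    (ce k B R) ∘ₗ lm π = ce k A R :=
  ce_coalg (π : A →ₗc[k] B)

theorem lm_S (π : A →ₐc[k] B) : lm π ∘ₗ antipode k = antipode k ∘ₗ lm π := by
  have h1 : lm π ⨳ (lm π ∘ₗ antipode k) = ce k A B := alg_cv_S (π : A →ₐ[k] B)
  have h2 : (antipode k ∘ₗ lm π) ⨳ lm π = ce k A B := by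
    have := cv_lm π (antipode k) LinearMap.id
    rw [S_cv_id, ce_lm] at this
    exact this.symm
  rw [← ce_cv (lm π ∘ₗ antipode k), ← h2, cv_assoc, h1, cv_ce]

theorem factor {V W X : Type u} [AddCommGroup V] [Module k V] [AddCommGroup W] [Module k W]
    [AddCommGroup X] [Module k X] (f : V →ₗ[k] W) (hf : Function.Surjective f) (g : V →ₗ[k] X)
    (h : ∀ v, f v = 0 → g v = 0) : ∃ l : W →ₗ[k] X, l ∘ₗ f = g := by
  obtain ⟨s, hs⟩ := f.exists_rightInverse_of_surjective (LinearMap.range_eq_top.2 hf)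
  refine ⟨g ∘ₗ s, ?_⟩
  ext v
  have h1 := LinearMap.congr_fun hs (f v)
  have := h (s (f v) - v) (by rw [map_sub, sub_eq_zero]; exact h1)
  rw [map_sub, sub_eq_zero] at this
  exact this

theorem left_of_right (π : A →ₐc[k] B) (hs : Function.Surjective π)
    (hA : Function.Injective (antipode k : A →ₗ[k] A))
    (hB : Function.Injective (antipode k : B →ₗ[k] B))
    (h : QG.IsRightNormal k A (lm π)) : QG.IsLeftNormal k A (lm π) := by
  obtain ⟨ρ, hρ⟩ := h
  refine factor _ hs _ fun a ha => ?_
  replace ha : lm π a = 0 := ha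
  have h1 : (lm π).rTensor A (QG.adR k A (antipode k a)) = 0 := by
    rw [← LinearMap.comp_apply, ← hρ, LinearMap.comp_apply, ← LinearMap.comp_apply (lm π), lm_S,
      LinearMap.comp_apply, ha, map_zero, map_zero]
  rw [← chi_adL] at h1
  have h2 : ∀ z, (lm π).rTensor A (chi z) = TensorProduct.comm k A B
      (TensorProduct.map (antipode k) (antipode k) ((lm π).lTensor A z)) := by
    intro z
    induction z with
    | zero => simp
    | add x x' hx hx' => simp only [map_add, hx, hx']
    | tmul x y => 
      have := LinearMap.congr_fun (lm_S π) y
      simp only [LinearMap.comp_apply] at this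
      simp [chi, this]
  rw [h2, LinearEquiv.map_eq_zero_iff] at h1
  rw [LinearMap.comp_apply]
  exact TensorProduct.map_injective_of_flat_flat _ _ hA hB (h1.trans (map_zero _).symm)

theorem right_of_left (π : A →ₐc[k] B) (hs : Function.Surjective π)
    (hA : Function.Injective (antipode k : A →ₗ[k] A))
    (hB : Function.Injective (antipode k : B →ₗ[k] B))
    (h : QG.IsLeftNormal k A (lm π)) : QG.IsRightNormal k A (lm π) := by
  obtain ⟨ρ, hρ⟩ := h
  refine factor _ hs _ fun a ha => ?_
  replace ha : lm π a = 0 := ha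
  have h1 : (lm π).lTensor A (QG.adL k A (antipode k a)) = 0 := by
    rw [← LinearMap.comp_apply, ← hρ, LinearMap.comp_apply, ← LinearMap.comp_apply (lm π), lm_S,
      LinearMap.comp_apply, ha, map_zero, map_zero]
  rw [← chi_adR] at h1
  have h2 : ∀ z, (lm π).lTensor A (chi z) = TensorProduct.comm k B A
      (TensorProduct.map (antipode k) (antipode k) ((lm π).rTensor A z)) := by
    intro z
    induction z with
    | zero => simp
    | add x x' hx hx' => simp only [map_add, hx, hx']
    | tmul x y => 
      have := LinearMap.congr_fun (lm_S π) x
      simp only [LinearMap.comp_apply] at this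
      simp [chi, this]
  rw [h2, LinearEquiv.map_eq_zero_iff] at h1
  rw [LinearMap.comp_apply]
  exact TensorProduct.map_injective_of_flat_flat _ _ hB hA (h1.trans (map_zero _).symm)

end transfer
end QGP

set_option linter.unusedSectionVars false
set_option linter.unusedSimpArgs false
set_option linter.unusedVariables false

namespace QGP
open Coalgebra HopfAlgebra

section ad
variable {k : Type u} [Field k] {A B : Type u} [Ring A] [HopfAlgebra k A] [Ring B] [HopfAlgebra k B]

variable (k) in
/-- left inclusion -/
noncomputable abbrev inL (R A : Type u) [Ring R] [Algebra k R] [Ring A] [Algebra k A] :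
    R →ₐ[k] R ⊗[k] A := Algebra.TensorProduct.includeLeft
variable (k) in
/-- right inclusion -/
noncomputable abbrev inR (R A : Type u) [Ring R] [Algebra k R] [Ring A] [Algebra k A] :
    A →ₐ[k] R ⊗[k] A := Algebra.TensorProduct.includeRight

theorem ad_lin {R : Type u} [Ring R] [Algebra k R] (F : A →ₗ[k] R) :
    F.rTensor A ∘ₗ QG.adR k A = ((inR k R A).toLinearMap ∘ₗ antipode k) ⨳
      (((inL k R A).toLinearMap ∘ₗ F) ⨳ (inR k R A).toLinearMap) := by
  ext a
  rw [cv_apply]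
  simp only [QG.adR, QG.comul2, LinearMap.comp_apply]
  generalize comul (R := k) a = z
  induction z with
  | zero => simp
  | tmul x y =>
    simp only [LinearMap.lTensor_tmul, LinearMap.rTensor_tmul, TensorProduct.map_tmul, 
      AlgHom.toLinearMap_apply, cv_apply]
    generalize comul (R := k) y = z
    induction z with
    | zero => simp
    | tmul x y => simp
    | add x y hx hy => simp only [map_add, TensorProduct.tmul_add, hx, hy]
  | add x y hx hy => simp only [map_add, hx, hy]

theorem adR_isComod : QG.IsComod k A (QG.adR k A) where
  coassoc a := by
    let asc : A ⊗[k] (A ⊗[k] A) →ₐ[k] (A ⊗[k] A) ⊗[k] A :=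
      (Algebra.TensorProduct.assoc k k k A A A).symm.toAlgHom
    let Q : A ⊗[k] A →ₐ[k] (A ⊗[k] A) ⊗[k] A :=
      asc.comp (Algebra.TensorProduct.map (AlgHom.id k A) (dl k A))
    let P : A ⊗[k] A →ₐ[k] (A ⊗[k] A) ⊗[k] A := asc.comp (inR k A (A ⊗[k] A))
    have hQi : Q.toLinearMap ∘ₗ (inL k A A).toLinearMap =
      (inL k (A ⊗[k] A) A).toLinearMap ∘ₗ (inL k A A).toLinearMap := by
      ext a; simp [Q, asc, Algebra.TensorProduct.one_def]
    have hPj : P.toLinearMap ∘ₗ (jR k A).toLinearMap = (inR k (A ⊗[k] A) A).toLinearMap := by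
      ext a; simp [P, asc, Algebra.TensorProduct.one_def]
    have hPi : P.toLinearMap ∘ₗ (iL k A).toLinearMap = 
        (inL k (A ⊗[k] A) A).toLinearMap ∘ₗ (jR k A).toLinearMap := by
      ext a; simp [P, asc, Algebra.TensorProduct.one_def]
    have hQj : Q.toLinearMap ∘ₗ (inR k A A).toLinearMap = P.toLinearMap ∘ₗ (dl k A).toLinearMap := by
      ext a; simp [P, Q]
    have hPd : P.toLinearMap ∘ₗ (dl k A).toLinearMap = 
       ((inL k (A ⊗[k] A) A).toLinearMap ∘ₗ (jR k A).toLinearMap) ⨳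
        (inR k (A ⊗[k] A) A).toLinearMap := by
      rw [comul_eq, alg_cv, hPi, hPj]
    have hPS : P.toLinearMap ∘ₗ (dl k A).toLinearMap ∘ₗ antipode k = 
        ((inR k (A ⊗[k] A) A).toLinearMap ∘ₗ antipode k) ⨳ 
       ((inL k (A ⊗[k] A) A).toLinearMap ∘ₗ (jR k A).toLinearMap ∘ₗ antipode k) := by
      rw [comul_S, alg_cv, ← LinearMap.comp_assoc, ← LinearMap.comp_assoc, hPi, hPj,
        LinearMap.comp_assoc]
    have e0 := ad_lin (k := k) (LinearMap.id (R := k) (M := A))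
    rw [LinearMap.rTensor_id, LinearMap.id_comp, LinearMap.comp_id] at e0
    have R1 : Q.toLinearMap ∘ₗ QG.adR k A = ((inR k (A ⊗[k] A) A).toLinearMap ∘ₗ antipode k) ⨳ 
       (((inL k (A ⊗[k] A) A).toLinearMap ∘ₗ (jR k A).toLinearMap ∘ₗ antipode k) ⨳
       (((inL k (A ⊗[k] A) A).toLinearMap ∘ₗ (inL k A A).toLinearMap) ⨳
       (((inL k (A ⊗[k] A) A).toLinearMap ∘ₗ (jR k A).toLinearMap) ⨳
        (inR k (A ⊗[k] A) A).toLinearMap))) := by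
      rw [e0, alg_cv, alg_cv, hQi, hQj, hPd, ← LinearMap.comp_assoc, hQj, LinearMap.comp_assoc,
        hPS, cv_assoc]
    have L1 : (QG.adR k A).rTensor A ∘ₗ QG.adR k A = Q.toLinearMap ∘ₗ QG.adR k A := by
      rw [R1, ad_lin]
      congr 1
      rw [show (inL k (A ⊗[k] A) A).toLinearMap ∘ₗ QG.adR k A = 
        ((inL k (A ⊗[k] A) A).toLinearMap ∘ₗ (jR k A).toLinearMap ∘ₗ antipode k) ⨳
       (((inL k (A ⊗[k] A) A).toLinearMap ∘ₗ (inL k A A).toLinearMap) ⨳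
       (((inL k (A ⊗[k] A) A).toLinearMap ∘ₗ (jR k A).toLinearMap))) by
        conv_lhs => rw [e0]
        rw [alg_cv, alg_cv]]
      simp only [cv_assoc]
    refine (LinearMap.congr_fun L1 a).trans ?_
    rw [LinearMap.comp_apply]
    generalize QG.adR k A a = z
    induction z with
    | zero => simp
    | tmul x y => rfl
    | add x y hx hy => simp only [map_add, hx, hy]
  counit a := by
    let E : A ⊗[k] A →ₐ[k] A := (Algebra.TensorProduct.rid k k A).toAlgHom.comp
      (Algebra.TensorProduct.map (AlgHom.id k A) (Bialgebra.counitAlgHom k A))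
    have e0 := ad_lin (k := k) (LinearMap.id (R := k) (M := A))
    rw [LinearMap.rTensor_id, LinearMap.id_comp, LinearMap.comp_id] at e0
    have e1 : E.toLinearMap ∘ₗ (inR k A A).toLinearMap = ce k A A := by
      ext a; simp [E, ce_apply, Algebra.algebraMap_eq_smul_one]
    have e2 : E.toLinearMap ∘ₗ (inL k A A).toLinearMap = LinearMap.id := by
      ext a; simp [E]
    have e3 : ce k A A ∘ₗ antipode k = ce k A A := by
      ext a; simp [ce_apply]
    have e4 : E.toLinearMap ∘ₗ QG.adR k A = LinearMap.id := by
      rw [e0, alg_cv, alg_cv, e1, e2, ← LinearMap.comp_assoc, e1, e3, ce_cv, cv_ce]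
    refine Eq.trans ?_ (LinearMap.congr_fun e4 a)
    rw [LinearMap.comp_apply]
    generalize QG.adR k A a = z
    induction z with
    | zero => simp
    | tmul x y => simp [E]
    | add x y hx hy => simp only [map_add, hx, hy]

variable {π : A →ₐc[k] B} {ρ : B →ₗ[k] B ⊗[k] A}

theorem rho_isComod (hs : Function.Surjective π)
    (h : ρ ∘ₗ lm π = (lm π).rTensor A ∘ₗ QG.adR k A) : QG.IsComod k A ρ where
  coassoc b := by
    obtain ⟨a, rfl⟩ := hs b
    have h1 : ρ (π a) = (lm π).rTensor A (QG.adR k A a) := LinearMap.congr_fun h a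
    have h2 : ∀ z, ρ.rTensor A ((lm π).rTensor A z) = 
      ((lm π).rTensor A).rTensor A ((QG.adR k A).rTensor A z) := by
      intro z
      rw [← LinearMap.comp_apply, ← LinearMap.rTensor_comp, h, LinearMap.rTensor_comp]
      rfl
    rw [h1, h2, adR_isComod.coassoc]
    generalize QG.adR k A a = z
    induction z with
    | zero => simp
    | tmul x y => 
      simp only [LinearMap.rTensor_tmul, LinearMap.lTensor_tmul]
      generalize comul (R := k) y = z
      induction z with
      | zero => simp
      | tmul x y => simp
      | add x y hx hy => simp only [map_add, TensorProduct.tmul_add, hx, hy]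
    | add x y hx hy => simp only [map_add, hx, hy]
  counit b := by
    obtain ⟨a, rfl⟩ := hs b
    have h1 : ρ (π a) = (lm π).rTensor A (QG.adR k A a) := LinearMap.congr_fun h a
    have h2 := congrArg (lm π) (adR_isComod (k := k).counit a)
    refine Eq.trans ?_ h2
    rw [h1]
    generalize QG.adR k A a = z
    induction z with
    | zero => simp
    | tmul x y => simp
    | add x y hx hy => simp only [map_add, hx, hy]

theorem rho_pi (hs : Function.Surjective π)
    (h : ρ ∘ₗ lm π = (lm π).rTensor A ∘ₗ QG.adR k A) (b : B) :
    (lm π).lTensor B (ρ b) = QG.adR k B b := by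
  obtain ⟨a, rfl⟩ := hs b
  have h1 : ρ (π a) = (lm π).rTensor A (QG.adR k A a) := LinearMap.congr_fun h a
  rw [h1]
  let PP : A ⊗[k] A →ₐ[k] B ⊗[k] B := Algebra.TensorProduct.map (π : A →ₐ[k] B) (π : A →ₐ[k] B)
  have h2 : (lm π).lTensor B ((lm π).rTensor A (QG.adR k A a)) = 
      (PP.toLinearMap ∘ₗ QG.adR k A) a := by
    rw [LinearMap.comp_apply]
    generalize QG.adR k A a = z
    induction z with
    | zero => simp
    | tmul x y => rfl
    | add x y hx hy => simp only [map_add, hx, hy]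
  have h3 : (PP.toLinearMap ∘ₗ QG.adR k A) = QG.adR k B ∘ₗ lm π := by
    have e1 : PP.toLinearMap ∘ₗ (jR k A).toLinearMap = (jR k B).toLinearMap ∘ₗ lm π := by
      ext a; simp [PP]
    have e2 : PP.toLinearMap ∘ₗ (dl k A).toLinearMap = (dl k B).toLinearMap ∘ₗ lm π := by
      ext a
      exact CoalgHomClass.map_comp_comul_apply π a
    rw [adR_eq, adR_eq, alg_cv, cv_lm, e2, ← LinearMap.comp_assoc, e1, LinearMap.comp_assoc, lm_S]
    rfl
  rw [h2, h3]; rfl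

variable {V : Type u} [AddCommGroup V] [Module k V]

/-- invariants of the quantum subgroup -/
noncomputable def inv (π : A →ₐc[k] B) (ρV : V →ₗ[k] V ⊗[k] A) : Submodule k V :=
  LinearMap.ker ((lm π).lTensor V ∘ₗ ρV - (TensorProduct.mk k V B).flip 1)

theorem mem_inv {ρV : V →ₗ[k] V ⊗[k] A} {x : V} :
    x ∈ inv π ρV ↔ (lm π).lTensor V (ρV x) = x ⊗ₜ 1 := by
  simp [inv, sub_eq_zero]

theorem inv_stab (hs : Function.Surjective π)
    (h : ρ ∘ₗ lm π = (lm π).rTensor A ∘ₗ QG.adR k A)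
    {ρV : V →ₗ[k] V ⊗[k] A} (hV : QG.IsComod k A ρV) : Stab ρV (inv π ρV) := by
  intro ψ x hx
  rw [mem_inv] at hx ⊢
  have ρ1 : ρ 1 = 1 := by
    have h1 : ρ (π 1) = (lm π).rTensor A (QG.adR k A 1) := LinearMap.congr_fun h 1
    rw [map_one] at h1
    rw [h1, adR_eq, cv_apply, Bialgebra.comul_one, Algebra.TensorProduct.one_def]
    simp [Algebra.TensorProduct.one_def]
  have om1 : ∀ α : A →ₗ[k] (B ⊗[k] A), Om ρV α (x ⊗ₜ 1) = α.lTensor V (ρV x) := by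
    intro α
    rw [Om_tmul]
    congr 2
    ext; simp
  have h1 : Om ρV (ρ ∘ₗ lm π) (x ⊗ₜ 1) = x ⊗ₜ 1 := by
    rw [om1, LinearMap.lTensor_comp, LinearMap.comp_apply, hx, LinearMap.lTensor_tmul, ρ1]
  have h2 := congrArg (Om ρV (inR k B A).toLinearMap) h1
  rw [← LinearMap.comp_apply, ← Om_cv hV, h, ad_lin, ← cv_assoc, alg_cv_S, ce_cv, om1, om1] at h2
  have h3 := congrArg ((ev ψ).lTensor V) h2
  rw [← LinearMap.lTensor_comp_apply, ← LinearMap.lTensor_comp_apply] at h3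
  have e : ev ψ ∘ₗ (((inL k B A).toLinearMap ∘ₗ lm π) ⨳ (inR k B A).toLinearMap) = 
      lm π ∘ₗ Rt ψ := by
    ext a
    rw [LinearMap.comp_apply, LinearMap.comp_apply, T_apply, cv_apply]
    generalize comul (R := k) a = z
    induction z with
    | zero => simp
    | tmul x y => simp
    | add x y hx hy => simp only [map_add, hx, hy]
  rw [e, LinearMap.lTensor_comp, LinearMap.comp_apply, ← rho_T hV] at h3
  rw [h3, T_apply]
  generalize ρV x = z
  induction z with
  | zero => simp
  | tmul x y => simp [TensorProduct.smul_tmul]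
  | add x y hx hy => simp only [map_add, TensorProduct.add_tmul, hx, hy]

end ad
end QGP

set_option linter.unusedSectionVars false
set_option linter.unusedSimpArgs false
set_option linter.unusedVariables false

namespace QGP
open Coalgebra HopfAlgebra

section subco
variable {k : Type u} [Field k] {C : Type u} [AddCommGroup C] [Module k C] [Coalgebra k C]

theorem subco_Rt {D : Submodule k C} (hD : QG.IsSubcoalgebra k C D) (ψ : C →ₗ[k] k) {c : C}
    (hc : c ∈ D) : Rt ψ c ∈ D := by
  obtain ⟨z, hz⟩ := hD c hc
  rw [T_apply, ← hz]
  clear hz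
  induction z with
  | zero => simp
  | tmul x y => simpa using D.smul_mem _ x.2
  | add x y hx hy => simp only [map_add]; exact D.add_mem hx hy

theorem subco_Lt {D : Submodule k C} (hD : QG.IsSubcoalgebra k C D) (ψ : C →ₗ[k] k) {c : C}
    (hc : c ∈ D) : Lt ψ c ∈ D := by
  obtain ⟨z, hz⟩ := hD c hc
  rw [Lt, LinearMap.comp_apply, ← hz]
  clear hz
  induction z with
  | zero => simp
  | tmul x y => simpa using D.smul_mem _ y.2
  | add x y hx hy => simp only [map_add]; exact D.add_mem hx hy

theorem subco_of {D : Submodule k C} (h1 : ∀ ψ : C →ₗ[k] k, ∀ c ∈ D, Rt ψ c ∈ D)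
    (h2 : ∀ ψ : C →ₗ[k] k, ∀ c ∈ D, Lt ψ c ∈ D) : QG.IsSubcoalgebra k C D := by
  intro x hx
  obtain ⟨q, hq⟩ := D.subtype.exists_leftInverse_of_injective (Submodule.ker_subtype D)
  have hq' : ∀ y ∈ D, (q y : C) = y := fun y hy => congrArg Subtype.val (LinearMap.congr_fun hq ⟨y, hy⟩)
  refine ⟨TensorProduct.map q q (comul x), ?_⟩
  have e : ∀ z, TensorProduct.map D.subtype D.subtype (TensorProduct.map q q z) = 
     (D.subtype ∘ₗ q).rTensor C ((D.subtype ∘ₗ q).lTensor C z) := by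
    intro z
    induction z with
    | zero => simp
    | tmul x y => simp
    | add x y hx hy => simp only [map_add, hx, hy]
  rw [e]
  have e1 : (D.subtype ∘ₗ q).lTensor C (comul x) = comul x := by
    refine ev_sep2 fun φ ψ => ?_
    rw [ev_lTensor, ev_evl, ev_evl]
    change ψ (q (Lt φ x)) = ψ (Lt φ x)
    rw [hq' _ (h2 φ x hx)]
  rw [e1]
  refine ev_sep fun ψ => ?_
  rw [ev_rTensor]
  exact hq' _ (h1 ψ x hx)

theorem mem_of_kill {V : Type u} [AddCommGroup V] [Module k V] {D : Submodule k V} {c : V} 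
    (h : ∀ ψ : V →ₗ[k] k, (∀ d ∈ D, ψ d = 0) → ψ c = 0) : c ∈ D := by
  by_contra hc
  obtain ⟨f, hf1, hf⟩ := Submodule.exists_le_ker_of_notMem hc
  exact hf1 (h f fun d hd => hf hd)

end subco

section endo
variable {k : Type u} [Field k] {W : Type u} [AddCommGroup W] [Module k W] [FiniteDimensional k W]
  [Nontrivial W]

variable (k W) in
theorem simple_End : IsSimpleRing (Module.End k W) := by
  classical
  let b := Module.finBasis k W
  have : Nonempty (Fin (Module.finrank k W)) := ⟨⟨0, Module.finrank_pos⟩⟩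
  exact IsSimpleRing.of_ringEquiv (algEquivMatrix b).symm.toRingEquiv inferInstance

theorem ideal_End (I : Submodule k (Module.End k W)) (hl : ∀ x, ∀ y ∈ I, x * y ∈ I)
    (hr : ∀ x, ∀ y ∈ I, y * x ∈ I) {y : Module.End k W} (hy : y ∈ I) (h0 : y ≠ 0) : 
    (1 : Module.End k W) ∈ I := by
  have := simple_End k W
  let J : TwoSidedIdeal (Module.End k W) := TwoSidedIdeal.mk' I I.zero_mem I.add_mem I.neg_mem
    (fun {x y} h => hl x y h) (fun {x y} h => hr y x h)
  have h := IsSimpleRing.one_mem_of_ne_zero_mem J h0 (by simpa [J] using hy)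
  simpa [J] using h

theorem end_auto (σ : Module.End k W →ₐ[k] Module.End k W) : 
    ∃ u : W ≃ₗ[k] W, ∀ X, u.toLinearMap ∘ₗ σ X = X ∘ₗ u.toLinearMap := by
  have := simple_End k W
  have hi : Function.Injective σ := RingHom.injective (σ : Module.End k W →+* Module.End k W)
  have hb : Function.Bijective σ := ⟨hi, (LinearMap.injective_iff_surjective (f := σ.toLinearMap)).1 hi⟩
  obtain ⟨T, hT⟩ := (AlgEquiv.ofBijective σ hb).eq_linearEquivConjAlgEquiv
  refine ⟨T.symm, fun X => ?_⟩
  have : σ X = T.conjAlgEquiv k X := by rw [← hT]; rfl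
  rw [this]
  ext w
  simp [LinearEquiv.conjAlgEquiv_apply]

end endo

section rep
variable {k : Type u} [Field k] {C : Type u} [AddCommGroup C] [Module k C] [Coalgebra k C]
  {W : Type u} [AddCommGroup W] [Module k W] 

/-- rational irreducible representation of the dual algebra -/
structure IsRep (τ : (C →ₗ[k] k) →ₗ[k] Module.End k W) : Prop where
  mul : ∀ ψ φ, τ (ψ ⨳ φ) = τ ψ * τ φ
  one : τ counit = 1
  rat : ∀ (w : W) (φ : W →ₗ[k] k), ∃ c : C, ∀ ψ, φ (τ ψ w) = ψ c
  irr : ∀ U : Submodule k W, (∀ ψ, ∀ w ∈ U, τ ψ w ∈ U) → U = ⊥ ∨ U = ⊤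

/-- coefficient coalgebra -/
def Cf (τ : (C →ₗ[k] k) →ₗ[k] Module.End k W) : Submodule k C := (LinearMap.ker τ).dualCoannihilator

theorem mem_Cf {τ : (C →ₗ[k] k) →ₗ[k] Module.End k W} {c : C} :
    c ∈ Cf τ ↔ ∀ ψ, τ ψ = 0 → ψ c = 0 := by
  simp [Cf, Submodule.mem_dualCoannihilator]

variable {τ : (C →ₗ[k] k) →ₗ[k] Module.End k W} (hτ : IsRep τ)
include hτ

theorem IsRep.zero_of_kill {ψ : C →ₗ[k] k} (h : ∀ c ∈ Cf τ, ψ c = 0) : τ ψ = 0 := by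
  ext w
  refine dual_ext (k := k) fun φ => ?_
  obtain ⟨c, hc⟩ := hτ.rat w φ
  rw [hc, h c (mem_Cf.2 fun θ hθ => by rw [← hc, hθ]; simp)]
  simp

variable [FiniteDimensional k W] [Nontrivial W] [IsAlgClosed k]

theorem IsRep.surj : Function.Surjective τ := by
  let E : Subalgebra k (Module.End k W) :=
    { carrier := Set.range τ
      mul_mem' := by rintro _ _ ⟨a, rfl⟩ ⟨b, rfl⟩; exact ⟨a ⨳ b, hτ.mul _ _⟩
      add_mem' := by rintro _ _ ⟨a, rfl⟩ ⟨b, rfl⟩; exact ⟨a + b, map_add _ _ _⟩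
      algebraMap_mem' := fun r => ⟨r • counit, by
        rw [map_smul, hτ.one, Algebra.algebraMap_eq_smul_one]⟩ }
  have hE : ∀ ψ, τ ψ ∈ E := fun ψ => ⟨ψ, rfl⟩
  have : IsSimpleModule E W := by
    rw [isSimpleModule_iff]
    refine { eq_bot_or_eq_top := fun N => ?_ }
    rcases hτ.irr (N.restrictScalars k) (fun ψ w hw => N.smul_mem (⟨τ ψ, hE ψ⟩ : E) hw) with h | h
    · left; exact Submodule.restrictScalars_injective k _ _ h
    · right; exact Submodule.restrictScalars_injective k _ _ h
  intro X
  let f : Module.End (Module.End E W) W :=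
    { toFun := X
      map_add' := X.map_add
      map_smul' := fun g w => by
        obtain ⟨a, rfl⟩ := (IsSimpleModule.algebraMap_end_bijective_of_isAlgClosed (A := E) (V := W) k).2 g
        change X (a • w) = a • X w
        exact X.map_smul a w }
  let b := Module.finBasis k W
  classical
  obtain ⟨⟨_, ψ, rfl⟩, hr⟩ := jacobson_density f (Finset.univ.image b)
  refine ⟨ψ, b.ext fun i => ?_⟩
  exact (hr (b i) (by simp)).symm

theorem IsRep.subco : QG.IsSubcoalgebra k C (Cf τ) := by
  refine subco_of (fun φ c hc => ?_) (fun φ c hc => ?_)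
  · rw [mem_Cf] at hc ⊢
    intro ψ hψ
    rw [app_Rt]; exact hc _ (by rw [hτ.mul, hψ, zero_mul])
  · rw [mem_Cf] at hc ⊢
    intro ψ hψ
    rw [app_Lt]; exact hc _ (by rw [hτ.mul, hψ, mul_zero])

theorem IsRep.simple : QG.IsSimpleSubcoalgebra k C (Cf τ) := by
  refine ⟨hτ.subco, fun h => ?_, fun D hD hs => ?_⟩
  · have := hτ.zero_of_kill (ψ := counit) (by rw [h]; simp)
    rw [hτ.one] at this
    exact one_ne_zero this
  let J : Submodule k (C →ₗ[k] k) := D.dualAnnihilator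
  have hJ : ∀ ψ, ψ ∈ J ↔ ∀ d ∈ D, ψ d = 0 := fun ψ => Submodule.mem_dualAnnihilator ψ
  have hkJ : ∀ ψ, τ ψ = 0 → ψ ∈ J := fun ψ h => (hJ ψ).2 fun d hd => mem_Cf.1 (hD hd) ψ h
  by_cases hz : ∀ ψ ∈ J, τ ψ = 0
  · right
    refine le_antisymm hD fun c hc => mem_of_kill fun ψ hψ => ?_
    exact mem_Cf.1 hc ψ (hz ψ ((hJ ψ).2 hψ))
  · left
    push Not at hz
    obtain ⟨ψ, hψ, h0⟩ := hz
    have h1 := ideal_End (J.map τ) (by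
      rintro x _ ⟨φ, hφ, rfl⟩
      obtain ⟨θ, rfl⟩ := hτ.surj x
      exact ⟨θ ⨳ φ, (hJ _).2 fun d hd => by
        rw [← app_Lt]; exact (hJ _).1 hφ _ (subco_Lt hs _ hd), hτ.mul _ _⟩) (by
      rintro x _ ⟨φ, hφ, rfl⟩
      obtain ⟨θ, rfl⟩ := hτ.surj x
      exact ⟨φ ⨳ θ, (hJ _).2 fun d hd => by
        rw [← app_Rt]; exact (hJ _).1 hφ _ (subco_Rt hs _ hd), hτ.mul _ _⟩) ⟨ψ, hψ, rfl⟩ h0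
    obtain ⟨φ, hφ, e⟩ := h1
    have hc : counit ∈ J := by
      have : counit - φ ∈ J := hkJ _ (by rw [map_sub, hτ.one, e, sub_self])
      simpa using J.add_mem this hφ
    rw [eq_bot_iff]
    intro d hd
    rw [Submodule.mem_bot]
    refine dual_ext (k := k) fun θ => ?_
    have := (hJ _).1 hc _ (subco_Lt hs θ hd)
    rw [app_Lt, ← ce_k, cv_ce] at this
    rw [this, map_zero]

theorem IsRep.central {f : C →ₗ[k] k} (hf : ∀ ψ, f ⨳ ψ = ψ ⨳ f) : ∃ μ : k, τ f = μ • 1 ∧ 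
    ∀ c ∈ Cf τ, f c = μ * counit (R := k) c := by
  obtain ⟨μ, hμ⟩ := Module.End.exists_eigenvalue (τ f)
  have h1 : τ f = μ • 1 := by
    rcases hτ.irr (Module.End.eigenspace (τ f) μ) (fun ψ w hw => by
      rw [Module.End.mem_eigenspace_iff] at hw ⊢
      rw [← Module.End.mul_apply, ← hτ.mul, hf, hτ.mul, Module.End.mul_apply, hw, map_smul]) with h | h
    · exact absurd h hμ
    · ext w
      have : w ∈ Module.End.eigenspace (τ f) μ := by rw [h]; trivial
      rw [Module.End.mem_eigenspace_iff] at this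
      simpa using this
  refine ⟨μ, h1, fun c hc => ?_⟩
  have := mem_Cf.1 hc (f - μ • counit) (by rw [map_sub, map_smul, h1, hτ.one, sub_self])
  simpa [sub_eq_zero] using this

theorem IsRep.trace (u : Module.End k W) : ∃ t : C, ∀ ψ, ψ t = LinearMap.trace k W (u * τ ψ) := by
  classical
  let b := Module.finBasis k W
  choose c hc using fun i => hτ.rat (b i) (b.coord i ∘ₗ u)
  refine ⟨∑ i, c i, fun ψ => ?_⟩
  rw [LinearMap.trace_eq_matrix_trace k b, Matrix.trace, map_sum]
  refine Finset.sum_congr rfl fun i _ => ?_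
  rw [← hc, Matrix.diag_apply, LinearMap.toMatrix_apply]
  rfl

end rep
end QGP

set_option linter.unusedSectionVars false
set_option linter.unusedSimpArgs false
set_option linter.unusedVariables false

namespace QGP
open Coalgebra HopfAlgebra

section hrep
variable {k : Type u} [Field k] {C : Type u} [Ring C] [HopfAlgebra k C]

theorem cv_S (ψ φ : C →ₗ[k] k) : 
    (ψ ⨳ φ) ∘ₗ antipode k = (φ ∘ₗ antipode k) ⨳ (ψ ∘ₗ antipode k) := by
  ext c
  rw [LinearMap.comp_apply, cv_apply, cv_apply, comul_S_apply]
  generalize comul (R := k) c = z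
  induction z with
  | zero => simp
  | tmul x y => simp [mul_comm]
  | add x y hx hy => simp only [map_add, hx, hy]

theorem ad_inv {t : C} (h : ∀ ψ φ : C →ₗ[k] k, 
    (ψ ⨳ φ) t = ((φ ∘ₗ antipode k ∘ₗ antipode k) ⨳ ψ) t) : QG.adR k C t = t ⊗ₜ 1 := by
  set z : C ⊗[k] C := TensorProduct.map LinearMap.id (antipode k ∘ₗ antipode k)
    (TensorProduct.comm k C C (comul t)) with hz
  have hc : comul (R := k) t = z := by
    refine comul_sep fun φ ψ => ?_
    rw [h, cv_apply, hz]
    generalize comul (R := k) t = z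
    induction z with
    | zero => simp
    | tmul x y => simp
    | add x y hx hy => simp only [map_add, hx, hy]
  have h1 : ∀ x y : C, (((jR k C).toLinearMap ∘ₗ antipode k) ⨳ (iL k C).toLinearMap) y * 
      jR k C (antipode k (antipode k x)) = 
      (antipode k).lTensor C (jR k C (antipode k x) * 
        ((jR k C).toLinearMap ⨳ (iL k C).toLinearMap) y) := by
    intro x y
    rw [cv_apply, cv_apply]
    generalize comul (R := k) y = z
    induction z with
    | zero => simp
    | tmul p q => simp [antipode_mul_antidistrib]
    | add x y hx hy => simp only [map_add, hx, hy, add_mul, mul_add]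
  rw [adR_eq, comul_eq, ← cv_assoc, cv_apply, hc, hz]
  have h2 : ((jR k C).toLinearMap ∘ₗ antipode k) ⨳ 
      ((jR k C).toLinearMap ⨳ (iL k C).toLinearMap) = (iL k C).toLinearMap := by
    rw [← cv_assoc, S_cv_alg, ce_cv]
  have h3 : (antipode k).lTensor C ((((jR k C).toLinearMap ∘ₗ antipode k) ⨳ 
      ((jR k C).toLinearMap ⨳ (iL k C).toLinearMap)) t) = t ⊗ₜ 1 := by
    rw [h2]; simp
  rw [← h3, cv_apply]
  generalize comul (R := k) t = z
  induction z with
  | zero => simp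
  | tmul x y => 
    have := h1 x y
    simpa using this
  | add x y hx hy => simp only [map_add, hx, hy]

variable {W : Type u} [AddCommGroup W] [Module k W] [FiniteDimensional k W] [Nontrivial W]
  [IsAlgClosed k] {τ : (C →ₗ[k] k) →ₗ[k] Module.End k W}

theorem IsRep.exists_t (hτ : IsRep τ) (hS : ∀ c ∈ Cf τ, antipode k (antipode k c) ∈ Cf τ) :
    ∃ t ∈ Cf τ, t ≠ 0 ∧ QG.adR k C t = t ⊗ₜ 1 := by
  let s2 : (C →ₗ[k] k) →ₗ[k] (C →ₗ[k] k) := (antipode k ∘ₗ antipode k : C →ₗ[k] C).dualMap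
  have hs2 : ∀ ψ, s2 ψ = ψ ∘ₗ antipode k ∘ₗ antipode k := fun ψ => rfl
  have hs2m : ∀ ψ φ, s2 (ψ ⨳ φ) = s2 ψ ⨳ s2 φ := by
    intro ψ φ
    rw [hs2, hs2, hs2, ← LinearMap.comp_assoc, cv_S, cv_S, LinearMap.comp_assoc, LinearMap.comp_assoc]
  have hs21 : s2 counit = counit := by
    ext c; rw [hs2]; simp
  obtain ⟨r, hr⟩ := τ.exists_rightInverse_of_surjective (LinearMap.range_eq_top.2 hτ.surj)
  have hr' : ∀ X, τ (r X) = X := fun X => LinearMap.congr_fun hr X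
  have hk : ∀ ψ φ, τ ψ = τ φ → τ (s2 ψ) = τ (s2 φ) := by
    intro ψ φ h
    rw [← sub_eq_zero, ← map_sub, ← map_sub]
    apply hτ.zero_of_kill
    intro c hc
    exact mem_Cf.1 (hS c hc) (ψ - φ) (by rw [map_sub, h, sub_self])
  let σ : Module.End k W →ₐ[k] Module.End k W := AlgHom.ofLinearMap (τ ∘ₗ s2 ∘ₗ r) 
    (by
      change τ (s2 (r 1)) = 1
      rw [hk (r 1) counit (by rw [hr', hτ.one]), hs21, hτ.one])
    (by
      intro X Y
      change τ (s2 (r (X * Y))) = τ (s2 (r X)) * τ (s2 (r Y))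
      rw [hk (r (X * Y)) (r X ⨳ r Y) (by rw [hτ.mul, hr', hr', hr']), hs2m, hτ.mul])
  obtain ⟨u, hu⟩ := end_auto σ
  have hu' : ∀ ψ, (u.toLinearMap : Module.End k W) * τ (s2 ψ) = τ ψ * u.toLinearMap := by
    intro ψ
    have := hu (τ ψ)
    rw [← Module.End.mul_eq_comp, ← Module.End.mul_eq_comp] at this
    rw [← this]
    congr 1
    exact hk _ _ (hr' _).symm
  obtain ⟨t, ht⟩ := hτ.trace (u.toLinearMap)
  refine ⟨t, mem_Cf.2 fun ψ h => by rw [ht, h]; simp, fun h0 => ?_, ad_inv fun ψ φ => ?_⟩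
  · obtain ⟨w, hw⟩ := exists_ne (0 : W)
    obtain ⟨d, hd⟩ := Module.Projective.exists_dual_eq_one k hw
    obtain ⟨ψ, hψ⟩ := hτ.surj (u.symm.toLinearMap ∘ₗ d.smulRight w)
    have := ht ψ
    rw [h0, hψ, Module.End.mul_eq_comp, ← LinearMap.comp_assoc] at this
    rw [show u.toLinearMap ∘ₗ u.symm.toLinearMap = LinearMap.id by ext; simp, LinearMap.id_comp,
      map_zero, LinearMap.trace_smulRight, hd] at this
    exact zero_ne_one this
  · rw [ht, ht, ← hs2, hτ.mul, hτ.mul, ← mul_assoc, ← mul_assoc, hu', LinearMap.trace_mul_cycle,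
      mul_assoc]

theorem IsRep.one_mem (hτ : IsRep τ) (h : (1 : C) ∈ Cf τ) (ψ : C →ₗ[k] k) : τ ψ = ψ 1 • 1 := by
  have one_ne : (1 : C) ≠ 0 := by
    intro h
    have := Bialgebra.counit_one (R := k) (A := C)
    rw [h, map_zero] at this
    exact zero_ne_one this
  have hs : QG.IsSubcoalgebra k C (k ∙ (1 : C)) := by
    have h1 : (1 : C) ∈ k ∙ (1 : C) := Submodule.mem_span_singleton_self _
    intro x hx
    obtain ⟨a, rfl⟩ := Submodule.mem_span_singleton.1 hx
    exact ⟨a • ((⟨1, h1⟩ : k ∙ (1 : C)) ⊗ₜ ⟨1, h1⟩), by simp [Algebra.TensorProduct.one_def]⟩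
  rcases hτ.simple.2.2 (k ∙ (1 : C)) (by simpa [Submodule.span_singleton_le_iff_mem] using h) hs with e | e
  · exact absurd (Submodule.span_singleton_eq_bot.1 e) one_ne
  · have : τ (ψ - ψ 1 • counit) = 0 := hτ.zero_of_kill (by
      intro c hc
      rw [← e] at hc
      obtain ⟨a, rfl⟩ := Submodule.mem_span_singleton.1 hc
      simp)
    rw [map_sub, map_smul, hτ.one, sub_eq_zero] at this
    exact this

end hrep
end QGP

set_option linter.unusedSectionVars false
set_option linter.unusedSimpArgs false
set_option linter.unusedVariables false

namespace QGP
open Coalgebra HopfAlgebra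

section core
variable {k : Type u} [Field k] {A B : Type u} [Ring A] [HopfAlgebra k A] [Ring B] [HopfAlgebra k B]
  {π : A →ₐc[k] B} {ρ : B →ₗ[k] B ⊗[k] A}

theorem exists_p (hs : Function.Surjective π)
    (h : ρ ∘ₗ lm π = (lm π).rTensor A ∘ₗ QG.adR k A) {hA : A →ₗ[k] k} (hi : IsInt hA) :
    ∃ p : B →ₗ[k] B, (∀ b, QG.adR k B b = b ⊗ₜ 1 → p b = b) ∧
      ∀ b, p.rTensor B (QG.adR k B b) = p b ⊗ₜ 1 := by
  have hc := rho_isComod hs h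
  obtain ⟨p, h1, h2, h3⟩ := maschke hi hc (inv π ρ) (inv_stab hs h hc)
  refine ⟨p, fun b hb => h3 b (mem_inv.2 (by rw [rho_pi hs h, hb])), fun b => ?_⟩
  have e : p.rTensor A (ρ b) = ρ (p b) := by
    refine ev_sep fun ψ => ?_
    rw [ev_rTensor]
    exact h1 ψ b
  rw [← rho_pi hs h, ← mem_inv.1 (h2 b), ← e]
  generalize ρ b = z
  induction z with
  | zero => simp
  | tmul x y => simp
  | add x y hx hy => simp only [map_add, hx, hy]

theorem central_of {p : B →ₗ[k] B} (hp : ∀ b, p.rTensor B (QG.adR k B b) = p b ⊗ₜ 1)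
    (φ ψ : B →ₗ[k] k) : (φ ∘ₗ p) ⨳ ψ = ψ ⨳ (φ ∘ₗ p) := by
  have h1 := ad_lin (k := k) (φ ∘ₗ p)
  have h2 : (φ ∘ₗ p).rTensor B ∘ₗ QG.adR k B = (inL k k B).toLinearMap ∘ₗ (φ ∘ₗ p) := by
    ext b
    rw [LinearMap.comp_apply, LinearMap.rTensor_comp, LinearMap.comp_apply, hp]
    simp
  have h3 := congrArg (fun x => (inR k k B).toLinearMap ⨳ x) (h2.symm.trans h1)
  rw [← cv_assoc (inR k k B).toLinearMap ((inR k k B).toLinearMap ∘ₗ antipode k), alg_cv_S, ce_cv] at h3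
  let E : k ⊗[k] B →ₗ[k] k := ev ψ
  ext b
  have h4 := congrArg E (LinearMap.congr_fun h3 b)
  have e1 : E ((((inL k k B).toLinearMap ∘ₗ φ ∘ₗ p) ⨳ (inR k k B).toLinearMap) b) = 
      ((φ ∘ₗ p) ⨳ ψ) b := by
    rw [cv_apply, cv_apply]
    generalize comul (R := k) b = z
    induction z with
    | zero => simp
    | tmul x y => simp [E, mul_comm]
    | add x y hx hy => simp only [map_add, hx, hy]
  have e2 : E (((inR k k B).toLinearMap ⨳ ((inL k k B).toLinearMap ∘ₗ φ ∘ₗ p)) b) = 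
      (ψ ⨳ (φ ∘ₗ p)) b := by
    rw [cv_apply, cv_apply]
    generalize comul (R := k) b = z
    induction z with
    | zero => simp
    | tmul x y => simp [E, mul_comm]
    | add x y hx hy => simp only [map_add, hx, hy]
  rw [← e1, ← e2, h4]

theorem kill_rep [IsAlgClosed k] {p : B →ₗ[k] B} (hp1 : ∀ b, QG.adR k B b = b ⊗ₜ 1 → p b = b)
    (hp : ∀ b, p.rTensor B (QG.adR k B b) = p b ⊗ₜ 1)
    (hS2 : ∀ D : Submodule k B, QG.IsSimpleSubcoalgebra k B D →
      D.map ((antipode (R := k) (A := B)) ∘ₗ (antipode (R := k) (A := B))) ≤ D)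
    {W : Type u} [AddCommGroup W] [Module k W] [FiniteDimensional k W] [Nontrivial W]
    {τ : (B →ₗ[k] k) →ₗ[k] Module.End k W} (hτ : IsRep τ) (φ : B →ₗ[k] k)
    (hφ : ∀ c ∈ Cf τ, φ c = 0) : τ (φ ∘ₗ p) = 0 := by
  obtain ⟨t, htC, ht0, ht⟩ := hτ.exists_t (fun c hc => hS2 _ hτ.simple ⟨c, hc, rfl⟩)
  have hpt := hp1 t ht
  have he : counit (R := k) t ≠ 0 := by
    intro he
    apply ht0
    refine dual_ext (k := k) fun θ => ?_
    obtain ⟨μ, -, h2⟩ := hτ.central (central_of hp θ)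
    have := h2 t htC
    rw [LinearMap.comp_apply, hpt, he, mul_zero] at this
    rw [this, map_zero]
  obtain ⟨μ, h1, h2⟩ := hτ.central (central_of hp φ)
  have := h2 t htC
  rw [LinearMap.comp_apply, hpt, hφ t htC] at this
  rcases mul_eq_zero.1 this.symm with h | h
  · rw [h1, h, zero_smul]
  · exact absurd h he

theorem exists_phi : ∃ φ : B →ₗ[k] k, φ 1 = 1 ∧ 
    ∀ D, QG.IsSimpleSubcoalgebra k B D → (1 : B) ∉ D → ∀ c ∈ D, φ c = 0 := by
  let ι := {D : Submodule k B // QG.IsSimpleSubcoalgebra k B D ∧ (1 : B) ∉ D}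
  let P : B → Prop := fun x => ∃ M : Submodule k B, QG.IsSubcoalgebra k B M ∧ x ∈ M ∧ 
    ∃ ψ : B →ₗ[k] k, ψ 1 = 1 ∧ ∀ m ∈ M, ψ m = 0
  have hP : ∀ x ∈ ⨆ i : ι, i.1, P x := by
    intro x hx
    induction hx using Submodule.iSup_induction' with
    | mem i x hx =>
      obtain ⟨f, hf1, hf⟩ := Submodule.exists_le_ker_of_notMem i.2.2
      refine ⟨i.1, i.2.1.1, hx, (f 1)⁻¹ • f, by simp [hf1], fun m hm => ?_⟩
      have : f m = 0 := hf hm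
      simp [this]
    | zero => exact ⟨⊥, by rintro _ rfl; exact ⟨0, by simp⟩, by simp, counit, by simp, by simp⟩
    | add x y hx hy h1 h2 =>
      obtain ⟨M, hM, hxM, ψ, hψ1, hψ⟩ := h1
      obtain ⟨N, hN, hyN, φ, hφ1, hφ⟩ := h2
      refine ⟨M ⊔ N, subco_of ?_ ?_, Submodule.add_mem_sup hxM hyN, ψ ⨳ φ, 
        by rw [cv_one_apply, hψ1, hφ1, one_mul], ?_⟩
      · intro θ c hc
        obtain ⟨m, hm, n, hn, rfl⟩ := Submodule.mem_sup.1 hc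
        rw [map_add]
        exact Submodule.add_mem_sup (subco_Rt hM θ hm) (subco_Rt hN θ hn)
      · intro θ c hc
        obtain ⟨m, hm, n, hn, rfl⟩ := Submodule.mem_sup.1 hc
        rw [map_add]
        exact Submodule.add_mem_sup (subco_Lt hM θ hm) (subco_Lt hN θ hn)
      · intro c hc
        obtain ⟨m, hm, n, hn, rfl⟩ := Submodule.mem_sup.1 hc
        rw [map_add, ← app_Rt, ← app_Lt, hψ _ (subco_Rt hM φ hm), hφ _ (subco_Lt hN ψ hn), add_zero]
  have h1 : (1 : B) ∉ ⨆ i : ι, i.1 := by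
    intro h
    obtain ⟨M, -, h1, ψ, hψ, hψ0⟩ := hP 1 h
    rw [hψ0 1 h1] at hψ
    exact zero_ne_one hψ
  obtain ⟨f, hf1, hf⟩ := Submodule.exists_le_ker_of_notMem h1
  refine ⟨(f 1)⁻¹ • f, by simp [hf1], fun D hD hD1 c hc => ?_⟩
  have : f c = 0 := hf (Submodule.mem_iSup_of_mem (⟨D, hD, hD1⟩ : ι) hc)
  simp [this]

variable {V : Type u} [AddCommGroup V] [Module k V] {ρV : V →ₗ[k] V ⊗[k] A}

/-- restricted representation -/
noncomputable def resRep (π : A →ₐc[k] B) (ρV : V →ₗ[k] V ⊗[k] A) (W : Submodule k V)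
    (hW : ∀ ψ : B →ₗ[k] k, ∀ w ∈ W, T ρV (ψ ∘ₗ lm π) w ∈ W) :
    (B →ₗ[k] k) →ₗ[k] Module.End k W where
  toFun ψ := (T ρV (ψ ∘ₗ lm π)).restrict (hW ψ)
  map_add' ψ φ := by
    ext w
    change T ρV ((ψ + φ) ∘ₗ lm π) w = T ρV (ψ ∘ₗ lm π) w + T ρV (φ ∘ₗ lm π) w
    rw [LinearMap.add_comp, ← Tl_apply, map_add]; rfl
  map_smul' a φ := by
    ext w
    change T ρV ((a • φ) ∘ₗ lm π) w = a • T ρV (φ ∘ₗ lm π) w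
    rw [LinearMap.smul_comp, ← Tl_apply, map_smul]; rfl

theorem resRep_apply {W : Submodule k V}
    {hW : ∀ ψ : B →ₗ[k] k, ∀ w ∈ W, T ρV (ψ ∘ₗ lm π) w ∈ W} (ψ : B →ₗ[k] k) (w : W) :
    (resRep π ρV W hW ψ w : V) = T ρV (ψ ∘ₗ lm π) w := rfl

theorem T_lm_cv (hV : QG.IsComod k A ρV) (ψ φ : B →ₗ[k] k) : T ρV ((ψ ⨳ φ) ∘ₗ lm π) = 
    T ρV (ψ ∘ₗ lm π) ∘ₗ T ρV (φ ∘ₗ lm π) := by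
  rw [cv_lm, T_cv hV]

theorem resRep_isRep (hV : QG.IsComod k A ρV) {W : Submodule k V}
    {hW : ∀ ψ : B →ₗ[k] k, ∀ w ∈ W, T ρV (ψ ∘ₗ lm π) w ∈ W}
    (hm : ∀ N ≤ W, (∀ ψ : B →ₗ[k] k, ∀ w ∈ N, T ρV (ψ ∘ₗ lm π) w ∈ N) → N = ⊥ ∨ N = W) :
    IsRep (resRep π ρV W hW) where
  mul ψ φ := by
    ext w
    rw [resRep_apply, T_lm_cv hV]
    rfl
  one := by
    ext w
    rw [resRep_apply, ← ce_k, ce_lm, ce_k, T_counit hV]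
    rfl
  rat w φ := by
    obtain ⟨g, hg⟩ := φ.exists_extend
    refine ⟨π (evl g (ρV w)), fun ψ => ?_⟩
    rw [← hg]
    change g (ev (ψ ∘ₗ lm π) (ρV w)) = _
    rw [ev_evl]; rfl
  irr U hU := by
    rcases hm (U.map W.subtype) (Submodule.map_subtype_le _ _) (by
      rintro ψ _ ⟨w, hw, rfl⟩
      exact ⟨_, hU ψ w hw, rfl⟩) with h | h
    · left
      apply Submodule.map_injective_of_injective W.subtype_injective
      rw [h]; simp
    · right
      apply Submodule.map_injective_of_injective W.subtype_injective
      rw [h]; simp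

theorem nilp_core [IsAlgClosed k] (hs : Function.Surjective π)
    (h : ρ ∘ₗ lm π = (lm π).rTensor A ∘ₗ QG.adR k A) (hV : QG.IsComod k A ρV)
    {f : B →ₗ[k] k} (hf : ∀ ψ, f ⨳ ψ = ψ ⨳ f)
    (hrep : ∀ (W : Type u) [AddCommGroup W] [Module k W] [FiniteDimensional k W] [Nontrivial W]
      (τ : (B →ₗ[k] k) →ₗ[k] Module.End k W), IsRep τ → τ f = 0 ∨ (1 : B) ∈ Cf τ)
    {U : Submodule k V} (hU : QG.IsSimpleSubcomod k A ρV U) {a : V} (ha : a ∈ U) :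
    ∃ n : ℕ, (T ρV (f ∘ₗ lm π) ^ n) a ∈ inv π ρV := by
  have hUs := (Stab_iff _ _).1 hU.1
  by_cases ha0 : a = 0
  · exact ⟨0, by rw [ha0]; simp⟩
  have hfin : Module.Finite k U := by
    have h1 : LinearMap.range ((Tl ρV).flip a) ≤ U := by rintro _ ⟨ψ, rfl⟩; exact hUs ψ a ha
    rcases hU.2.2 _ h1 ((Stab_iff _ _).2 (stab_orb hV a)) with e | e
    · have := mem_orb hV a
      rw [e] at this
      exact absurd this ha0
    · rw [← e]; exact fin_orb ρV a
  set X := T ρV (f ∘ₗ lm π) with hX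
  have hcomm : ∀ ψ : B →ₗ[k] k, Commute (T ρV (ψ ∘ₗ lm π)) X := by
    intro ψ
    change T ρV (ψ ∘ₗ lm π) ∘ₗ X = X ∘ₗ T ρV (ψ ∘ₗ lm π)
    rw [← T_lm_cv hV, ← T_lm_cv hV, hf]
  have hXU : ∀ u ∈ U, X u ∈ U := fun u hu => hUs _ u hu
  obtain ⟨n, hn, hn1⟩ := ((X.restrict hXU).eventually_isCompl_ker_pow_range_pow.and 
    (Filter.eventually_ge_atTop 1)).exists
  have hpow : ∀ (m : ℕ) (u : U), (((X.restrict hXU) ^ m) u : V) = (X ^ m) u := by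
    intro m u
    induction m with
    | zero => simp
    | succ m ih => rw [pow_succ', pow_succ', Module.End.mul_apply, Module.End.mul_apply, ← ih]; rfl
  by_cases hz : (X ^ n) a = 0
  · exact ⟨n, by rw [hz]; exact Submodule.zero_mem _⟩
  let S : Set (Submodule k V) := {N | N ≠ ⊥ ∧ N ≤ U ∧ 
    (∀ ψ : B →ₗ[k] k, ∀ w ∈ N, T ρV (ψ ∘ₗ lm π) w ∈ N) ∧ ∀ w ∈ N, X w = 0 → w = 0}
  have hR : U.map (X ^ n) ∈ S := by
    refine ⟨fun e => hz ?_, ?_, ?_, ?_⟩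
    · have : (X ^ n) a ∈ U.map (X ^ n) := ⟨a, ha, rfl⟩
      rw [e] at this
      exact this
    · rintro _ ⟨u, hu, rfl⟩
      rw [← hpow n ⟨u, hu⟩]
      exact Subtype.prop _
    · rintro ψ _ ⟨u, hu, rfl⟩
      refine ⟨T ρV (ψ ∘ₗ lm π) u, hUs _ u hu, ?_⟩
      exact (LinearMap.congr_fun ((hcomm ψ).pow_right n) u).symm
    · rintro _ ⟨u, hu, rfl⟩ h0
      have h1 : ((X.restrict hXU) ^ n) ⟨u, hu⟩ ∈ LinearMap.range ((X.restrict hXU) ^ n) := ⟨_, rfl⟩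
      have h2 : ((X.restrict hXU) ^ n) ⟨u, hu⟩ ∈ LinearMap.ker ((X.restrict hXU) ^ n) := by
        rw [LinearMap.mem_ker]
        obtain ⟨m, rfl⟩ := Nat.exists_eq_add_of_le' hn1
        apply Subtype.ext
        rw [hpow, hpow]
        rw [pow_succ, Module.End.mul_apply, ← pow_succ, h0]
        simp
      have := Submodule.disjoint_def.1 hn.disjoint _ h2 h1
      have := congrArg Subtype.val this
      rwa [hpow] at this
  obtain ⟨W, hW, hmin⟩ := (measure (fun N : Submodule k V => Module.finrank k N)).wf.has_min S ⟨_, hR⟩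
  obtain ⟨hW0, hWU, hWs, hWX⟩ := hW
  have hWf : Module.Finite k W := Submodule.finiteDimensional_of_le hWU
  have hWn : Nontrivial W := Submodule.nontrivial_iff_ne_bot.2 hW0
  have hτ : IsRep (resRep π ρV W hWs) := resRep_isRep hV (by
    intro N hN hNs
    by_contra hcon
    push Not at hcon
    refine hmin N ⟨hcon.1, hN.trans hWU, hNs, fun w hw => hWX w (hN hw)⟩ ?_
    exact Submodule.finrank_lt_finrank_of_lt (lt_of_le_of_ne hN hcon.2))
  obtain ⟨w, hw0⟩ := exists_ne (0 : W)
  rcases hrep W _ hτ with h1 | h1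
  · exfalso
    apply hw0
    apply Subtype.ext
    apply hWX w w.2
    have := congrArg Subtype.val (LinearMap.congr_fun h1 w)
    rw [resRep_apply] at this
    exact this
  · have hwi : (w : V) ∈ inv π ρV := by
      rw [mem_inv]
      refine ev_sep fun ψ => ?_
      rw [ev_lTensor, ev_tmul]
      have := congrArg Subtype.val (LinearMap.congr_fun (hτ.one_mem h1 ψ) w)
      rw [resRep_apply] at this
      exact this
    have hUK : U ≤ inv π ρV := by
      rcases hU.2.2 (U ⊓ inv π ρV) inf_le_left ((Stab_iff _ _).2 (fun ψ x hx => 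
        ⟨hUs ψ x hx.1, inv_stab hs h hV ψ x hx.2⟩)) with e | e
      · have : (w : V) ∈ U ⊓ inv π ρV := ⟨hWU w.2, hwi⟩
        rw [e] at this
        exact absurd (Subtype.ext ((Submodule.mem_bot k).1 this)) hw0
      · rw [← e]; exact inf_le_right
    exact ⟨0, by simpa using hUK ha⟩

end core
end QGP

set_option linter.unusedSectionVars false
set_option linter.unusedSimpArgs false
set_option linter.unusedVariables false

namespace QGP
open Coalgebra HopfAlgebra

section core
variable {k : Type u} [Field k] {A B : Type u} [Ring A] [HopfAlgebra k A] [Ring B] [HopfAlgebra k B]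
  {π : A →ₐc[k] B} {ρ : B →ₗ[k] B ⊗[k] A}

theorem Lt_one (ψ : B →ₗ[k] k) : Lt ψ (1 : B) = ψ 1 • (1 : B) :=
  dual_ext fun θ => by rw [app_Lt, cv_one_apply, map_smul, smul_eq_mul]

theorem int_of_pow {f : B →ₗ[k] k} (hf : ∀ ψ, f ⨳ ψ = ψ ⨳ f) (f1 : f 1 = 1)
    (hn : ∀ b, ∃ (n : ℕ) (c : k), (Rt f ^ n) b = c • (1 : B)) : ∃ h : B →ₗ[k] k, IsInt h := by
  have one_ne : (1 : B) ≠ 0 := by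
    intro h
    have := Bialgebra.counit_one (R := k) (A := B)
    rw [h, map_zero] at this
    exact zero_ne_one this
  have hone : ∀ n : ℕ, (Rt f ^ n) (1 : B) = 1 := by
    intro n
    induction n with
    | zero => simp
    | succ n ih => rw [pow_succ, Module.End.mul_apply, Rt_one, f1, one_smul, ih]
  have up : ∀ (n m : ℕ) (c : k) (b : B), (Rt f ^ n) b = c • (1 : B) → 
      (Rt f ^ (m + n)) b = c • (1 : B) := by
    intro n m c b h
    rw [pow_add, Module.End.mul_apply, h, map_smul, hone]
  have uq : ∀ (n m : ℕ) (c d : k) (b : B), (Rt f ^ n) b = c • (1 : B) → 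
      (Rt f ^ m) b = d • (1 : B) → c = d := by
    intro n m c d b h1 h2
    have h3 := up n m c b h1
    have h4 := up m n d b h2
    rw [add_comm, h4] at h3
    exact (smul_left_injective k one_ne h3).symm
  choose n g hg using hn
  have key : ∀ (m : ℕ) (c : k) (b : B), (Rt f ^ m) b = c • (1 : B) → g b = c :=
    fun m c b h => uq _ _ _ _ b (hg b) h
  let h : B →ₗ[k] k :=
    { toFun := g
      map_add' := fun x y => by
        apply key (n x + n y)
        rw [map_add, add_smul, up _ _ _ _ (hg y), add_comm (n x) (n y), up _ _ _ _ (hg x)]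
      map_smul' := fun a x => by
        apply key (n x)
        rw [map_smul, hg, smul_smul]; rfl }
  have hk : ∀ b, h b = g b := fun _ => rfl
  have c1 : ∀ ψ : B →ₗ[k] k, Commute (Rt ψ) (Rt f) := by
    intro ψ
    change Rt ψ ∘ₗ Rt f = Rt f ∘ₗ Rt ψ
    rw [← T_cv (comul_isComod k B), ← T_cv (comul_isComod k B), hf]
  have c2 : ∀ ψ : B →ₗ[k] k, Commute (Lt ψ) (Rt f) := by
    intro ψ
    ext b
    exact (Rt_Lt f ψ b).symm
  refine ⟨h, ⟨?_, fun ψ => ?_, fun ψ => ?_⟩⟩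
  · exact key 0 1 1 (by simp)
  · ext b
    rw [← app_Rt]
    apply key (n b)
    have := LinearMap.congr_fun ((c1 ψ).pow_right (n b)) b
    rw [Module.End.mul_apply, Module.End.mul_apply, hg, map_smul, Rt_one] at this
    rw [← this, smul_smul, LinearMap.smul_apply, smul_eq_mul, mul_comm, hk]
  · ext b
    rw [← app_Lt]
    apply key (n b)
    have := LinearMap.congr_fun ((c2 ψ).pow_right (n b)) b
    rw [Module.End.mul_apply, Module.End.mul_apply, hg, map_smul, Lt_one] at this
    rw [← this, smul_smul, LinearMap.smul_apply, smul_eq_mul, mul_comm, hk]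

theorem core [IsAlgClosed k] (hs : Function.Surjective π)
    (hn : QG.IsRightNormal k A (lm π)) {hA : A →ₗ[k] k} (hi : IsInt hA)
    (hS2 : ∀ D : Submodule k B, QG.IsSimpleSubcoalgebra k B D →
      D.map ((antipode (R := k) (A := B)) ∘ₗ (antipode (R := k) (A := B))) ≤ D) :
    ∃ h : B →ₗ[k] k, IsInt h := by
  obtain ⟨ρ, h⟩ := hn
  obtain ⟨p, hp1, hp⟩ := exists_p hs h hi
  obtain ⟨φ, φ1, hφ⟩ := exists_phi (k := k) (B := B)
  have hf := central_of hp φ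
  set f := φ ∘ₗ p with hfd
  have f1 : f 1 = 1 := by
    rw [hfd, LinearMap.comp_apply, hp1, φ1]
    rw [adR_eq, cv_apply, Bialgebra.comul_one, Algebra.TensorProduct.one_def]
    simp [Algebra.TensorProduct.one_def]
  have hV := comul_isComod k A
  have hA1 : ∀ a : A, ∃ n : ℕ, (T comul (f ∘ₗ lm π) ^ n) a ∈ inv π (comul (R := k) (A := A)) := by
    obtain ⟨ι, U, hU, -, ht⟩ := css_of_int hi A comul hV
    intro a
    have ha : a ∈ ⨆ i, U i := by rw [ht]; trivial
    have hup : ∀ (m : ℕ) (x : A), x ∈ inv π (comul (R := k) (A := A)) → 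
        (T comul (f ∘ₗ lm π) ^ m) x ∈ inv π (comul (R := k) (A := A)) := by
      intro m x hx
      induction m with
      | zero => simpa using hx
      | succ m ih => rw [pow_succ', Module.End.mul_apply]; exact inv_stab hs h hV _ _ ih
    induction ha using Submodule.iSup_induction' with
    | mem i x hx =>
      refine nilp_core hs h hV hf ?_ (hU i) hx
      intro W _ _ _ _ τ hτ
      by_cases h1 : (1 : B) ∈ Cf τ
      · right; exact h1
      · left
        exact kill_rep hp1 hp hS2 hτ φ (hφ _ hτ.simple h1)
    | zero => exact ⟨0, by simp⟩
    | add x y hx hy h1 h2 =>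
      obtain ⟨n, h1⟩ := h1
      obtain ⟨m, h2⟩ := h2
      refine ⟨n + m, ?_⟩
      rw [map_add]
      refine Submodule.add_mem _ ?_ ?_
      · rw [add_comm, pow_add]; exact hup _ _ h1
      · rw [pow_add]; exact hup _ _ h2
  refine int_of_pow hf f1 fun b => ?_
  obtain ⟨a, rfl⟩ := hs b
  obtain ⟨n, hn⟩ := hA1 a
  refine ⟨n, counit ((T comul (f ∘ₗ lm π) ^ n) a), ?_⟩
  have e1 : ∀ x : A, π (T comul (f ∘ₗ lm π) x) = Rt f (π x) := by
    intro x
    refine dual_ext (k := k) fun θ => ?_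
    rw [app_Rt]
    change (θ ∘ₗ lm π) (Rt (f ∘ₗ lm π) x) = ((θ ⨳ f) ∘ₗ lm π) x
    rw [app_Rt, cv_lm]
  have e2 : ∀ (m : ℕ) (x : A), π ((T comul (f ∘ₗ lm π) ^ m) x) = (Rt f ^ m) (π x) := by
    intro m x
    induction m with
    | zero => simp
    | succ m ih => rw [pow_succ', pow_succ', Module.End.mul_apply, Module.End.mul_apply, e1, ih]
  rw [← e2]
  generalize (T comul (f ∘ₗ lm π) ^ n) a = x at hn ⊢
  rw [mem_inv] at hn
  refine dual_ext (k := k) fun θ => ?_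
  have h2 := congrArg (fun z => counit (R := k) (ev θ z)) hn
  simp only [ev_lTensor, ev_tmul, map_smul, smul_eq_mul] at h2
  have h3 : counit (R := k) (Rt (θ ∘ₗ lm π) x) = θ (π x) := by
    rw [app_Rt, ← ce_k, ce_cv]; rfl
  rw [map_smul, smul_eq_mul, ← h3, mul_comm, ← h2]
  rfl

end core
end QGP

set_option linter.unusedSectionVars false
set_option linter.unusedSimpArgs false
set_option linter.unusedVariables false

namespace QGP
open Coalgebra HopfAlgebra

section oc

/-- opposite-coopposite Hopf algebra, on the same underlying space -/
def OC (A : Type u) : Type u := A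

variable {k : Type u} [Field k] {A : Type u} [Ring A] [HopfAlgebra k A]

instance ocAdd : AddCommGroup (OC A) := inferInstanceAs (AddCommGroup A)

instance ocRing : Ring (OC A) :=
  { ocAdd (A := A) with
    mul := fun x y => @HMul.hMul A A A _ y x
    one := (1 : A)
    mul_assoc := fun x y z => (@mul_assoc A _ z y x).symm
    one_mul := fun x => @mul_one A _ x
    mul_one := fun x => @one_mul A _ x
    zero_mul := fun x => @mul_zero A _ x
    mul_zero := fun x => @zero_mul A _ x
    left_distrib := fun x y z => @add_mul A _ _ _ y z x
    right_distrib := fun x y z => @mul_add A _ _ _ z x y }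

instance ocModule : Module k (OC A) := inferInstanceAs (Module k A)

instance ocAlg : Algebra k (OC A) :=
  Algebra.ofModule (fun r x y => @mul_smul_comm k A _ _ _ r y x)
    (fun r x y => @smul_mul_assoc k A _ _ _ r y x)

/-- identity map -/
noncomputable def oc (k A : Type u) [Field k] [Ring A] [HopfAlgebra k A] : A ≃ₗ[k] OC A :=
  LinearEquiv.refl k A

theorem oc_mul (x y : A) : oc k A x * oc k A y = oc k A (y * x) := rfl
theorem oc_one : oc k A 1 = 1 := rfl

/-- flipped comultiplication transported -/
noncomputable def ocF (k A : Type u) [Field k] [Ring A] [HopfAlgebra k A] :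
    A ⊗[k] A →ₗ[k] OC A ⊗[k] OC A :=
  TensorProduct.map (oc k A).toLinearMap (oc k A).toLinearMap ∘ₗ
    (TensorProduct.comm k A A).toLinearMap

@[simp] theorem ocF_tmul (x y : A) : ocF k A (x ⊗ₜ y) = oc k A y ⊗ₜ oc k A x := by
  simp [ocF]

theorem ocF_mul (w z : A ⊗[k] A) : ocF k A w * ocF k A z = ocF k A (z * w) := by
  induction w with
  | zero => simp
  | add x y hx hy => simp only [map_add, add_mul, mul_add, hx, hy]
  | tmul x y =>
    induction z with
    | zero => simp
    | add x y hx hy => simp only [map_add, add_mul, mul_add, hx, hy]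
    | tmul a b => simp [oc_mul]

noncomputable instance ocCS : CoalgebraStruct k (OC A) where
  comul := ocF k A ∘ₗ comul ∘ₗ (oc k A).symm.toLinearMap
  counit := counit ∘ₗ (oc k A).symm.toLinearMap

theorem oc_comul (x : A) : comul (R := k) (oc k A x) = ocF k A (comul x) := rfl
theorem oc_counit (x : A) : counit (R := k) (oc k A x) = counit (R := k) x := rfl

/-- reversal -/
noncomputable def ocRev (k A : Type u) [Field k] [Ring A] [HopfAlgebra k A] :
    A ⊗[k] (A ⊗[k] A) →ₗ[k] (OC A ⊗[k] OC A) ⊗[k] OC A :=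
  TensorProduct.map (ocF k A) (oc k A).toLinearMap ∘ₗ (TensorProduct.comm k A (A ⊗[k] A)).toLinearMap

noncomputable instance ocCoalg : Coalgebra k (OC A) where
  coassoc := by
    ext x
    obtain ⟨x, rfl⟩ := (oc k A).surjective x
    simp only [LinearMap.comp_apply, LinearEquiv.coe_coe, oc_comul]
    apply (TensorProduct.assoc k (OC A) (OC A) (OC A)).symm.injective
    rw [LinearEquiv.symm_apply_apply]
    have h1 : ∀ z : A ⊗[k] A, (comul (R := k) (A := OC A)).rTensor (OC A) (ocF k A z)
        = ocRev k A ((comul (R := k)).lTensor A z) := by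
      intro z
      induction z with
      | zero => simp
      | add x y hx hy => simp only [map_add, hx, hy]
      | tmul a b => simp [ocRev, oc_comul]
    have h2 : ∀ z : A ⊗[k] A, (TensorProduct.assoc k (OC A) (OC A) (OC A)).symm
        ((comul (R := k) (A := OC A)).lTensor (OC A) (ocF k A z))
        = ocRev k A (TensorProduct.assoc k A A A ((comul (R := k)).rTensor A z)) := by
      intro z
      induction z with
      | zero => simp
      | add x y hx hy => simp only [map_add, hx, hy]
      | tmul a b =>
        simp only [ocF_tmul, LinearMap.lTensor_tmul, LinearMap.rTensor_tmul, oc_comul]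
        generalize comul (R := k) a = w
        induction w with
        | zero => simp
        | add x y hx hy => simp only [map_add, TensorProduct.tmul_add, TensorProduct.add_tmul, hx, hy]
        | tmul c d => simp [ocRev]
    rw [h1, h2, coassoc_apply]
  rTensor_counit_comp_comul := by
    ext x
    obtain ⟨x, rfl⟩ := (oc k A).surjective x
    simp only [LinearMap.comp_apply, oc_comul]
    have h1 : ∀ z : A ⊗[k] A, (counit (R := k) (A := OC A)).rTensor (OC A) (ocF k A z)
        = (oc k A).toLinearMap.lTensor k (TensorProduct.comm k A k ((counit (R := k)).lTensor A z)) := by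
      intro z
      induction z with
      | zero => simp
      | add x y hx hy => simp only [map_add, hx, hy]
      | tmul a b => simp [oc_counit]
    rw [h1, lTensor_counit_comul]
    simp
  lTensor_counit_comp_comul := by
    ext x
    obtain ⟨x, rfl⟩ := (oc k A).surjective x
    simp only [LinearMap.comp_apply, oc_comul]
    have h1 : ∀ z : A ⊗[k] A, (counit (R := k) (A := OC A)).lTensor (OC A) (ocF k A z)
        = (oc k A).toLinearMap.rTensor k (TensorProduct.comm k k A ((counit (R := k)).rTensor A z)) := by
      intro z
      induction z with
      | zero => simp
      | add x y hx hy => simp only [map_add, hx, hy]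
      | tmul a b => simp [oc_counit]
    rw [h1, rTensor_counit_comul]
    simp

noncomputable instance ocBialg : Bialgebra k (OC A) :=
  Bialgebra.mk' k (OC A)
    (by rw [← oc_one (k := k), oc_counit, Bialgebra.counit_one])
    (by
      intro x y
      obtain ⟨x, rfl⟩ := (oc k A).surjective x
      obtain ⟨y, rfl⟩ := (oc k A).surjective y
      rw [oc_mul, oc_counit, oc_counit, oc_counit, Bialgebra.counit_mul, mul_comm])
    (by
      rw [← oc_one (k := k), oc_comul, Bialgebra.comul_one, Algebra.TensorProduct.one_def]
      simp [oc_one, Algebra.TensorProduct.one_def])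
    (by
      intro x y
      obtain ⟨x, rfl⟩ := (oc k A).surjective x
      obtain ⟨y, rfl⟩ := (oc k A).surjective y
      rw [oc_mul, oc_comul, oc_comul, oc_comul, Bialgebra.comul_mul, ocF_mul])

noncomputable instance ocHopf : HopfAlgebra k (OC A) where
  antipode := (oc k A).toLinearMap ∘ₗ antipode k ∘ₗ (oc k A).symm.toLinearMap
  mul_antipode_rTensor_comul := by
    ext x
    obtain ⟨x, rfl⟩ := (oc k A).surjective x
    simp only [LinearMap.comp_apply]
    have h1 : ∀ z : A ⊗[k] A, LinearMap.mul' k (OC A) (((oc k A).toLinearMap ∘ₗ antipode k ∘ₗ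
        (oc k A).symm.toLinearMap).rTensor (OC A) (ocF k A z)) =
        oc k A (LinearMap.mul' k A ((antipode k).lTensor A z)) := by
      intro z
      induction z with
      | zero => simp
      | add x y hx hy => simp only [map_add, hx, hy]
      | tmul a b => simp [oc_mul]
    refine (h1 (comul x)).trans ?_
    rw [mul_antipode_lTensor_comul_apply]
    rw [Algebra.linearMap_apply, oc_counit, Algebra.algebraMap_eq_smul_one,
      Algebra.algebraMap_eq_smul_one, map_smul, oc_one]
  mul_antipode_lTensor_comul := by
    ext x
    obtain ⟨x, rfl⟩ := (oc k A).surjective x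
    simp only [LinearMap.comp_apply]
    have h1 : ∀ z : A ⊗[k] A, LinearMap.mul' k (OC A) (((oc k A).toLinearMap ∘ₗ antipode k ∘ₗ
        (oc k A).symm.toLinearMap).lTensor (OC A) (ocF k A z)) =
        oc k A (LinearMap.mul' k A ((antipode k).rTensor A z)) := by
      intro z
      induction z with
      | zero => simp
      | add x y hx hy => simp only [map_add, hx, hy]
      | tmul a b => simp [oc_mul]
    refine (h1 (comul x)).trans ?_
    rw [mul_antipode_rTensor_comul_apply]
    rw [Algebra.linearMap_apply, oc_counit, Algebra.algebraMap_eq_smul_one,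
      Algebra.algebraMap_eq_smul_one, map_smul, oc_one]

theorem oc_S (x : A) : antipode k (oc k A x) = oc k A (antipode k x) := rfl

theorem oc_adR (x : A) : QG.adR k (OC A) (oc k A x) = ocF k A (QG.adL k A x) := by
  rw [adR_eq, adL_eq, cv_apply, cv_apply, oc_comul]
  generalize comul (R := k) x = z
  induction z with
  | zero => simp
  | add x y hx hy => simp only [map_add, hx, hy]
  | tmul a b =>
    simp only [ocF_tmul, TensorProduct.map_tmul, LinearMap.mul'_apply, LinearMap.comp_apply, oc_S]
    rw [← ocF_mul]
    congr 1

theorem oc_cv (α β : OC A →ₗ[k] k) (x : A) :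
    (α ⨳ β) (oc k A x) = ((β ∘ₗ (oc k A).toLinearMap) ⨳ (α ∘ₗ (oc k A).toLinearMap)) x := by
  rw [cv_apply, cv_apply, oc_comul]
  generalize comul (R := k) x = z
  induction z with
  | zero => simp
  | add x y hx hy => simp only [map_add, hx, hy]
  | tmul a b => simp [mul_comm]

theorem oc_int {h : OC A →ₗ[k] k} : IsInt h ↔ IsInt (h ∘ₗ (oc k A).toLinearMap) := by
  have key : ∀ α β : A →ₗ[k] k, ((β ∘ₗ (oc k A).symm.toLinearMap) ⨳ (α ∘ₗ (oc k A).symm.toLinearMap))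
       ∘ₗ (oc k A).toLinearMap = α ⨳ β := by
    intro α β; ext x
    refine (oc_cv _ _ x).trans ?_
    rfl
  constructor
  · intro hh
    refine ⟨hh.one, fun ψ => ?_, fun ψ => ?_⟩
    · refine (key _ _).symm.trans ?_
      have := hh.left (ψ ∘ₗ (oc k A).symm.toLinearMap)
      exact congrArg (fun f => f ∘ₗ (oc k A).toLinearMap) this
    · refine (key _ _).symm.trans ?_
      have := hh.right (ψ ∘ₗ (oc k A).symm.toLinearMap)
      exact congrArg (fun f => f ∘ₗ (oc k A).toLinearMap) this
  · intro hh
    refine ⟨hh.one, fun ψ => ?_, fun ψ => ?_⟩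
    · ext x
      obtain ⟨x, rfl⟩ := (oc k A).surjective x
      rw [oc_cv, hh.left]; rfl
    · ext x
      obtain ⟨x, rfl⟩ := (oc k A).surjective x
      rw [oc_cv, hh.right]; rfl

theorem oc_subco (D : Submodule k (OC A)) :
    QG.IsSubcoalgebra k (OC A) D ↔ QG.IsSubcoalgebra k A (D.comap (oc k A).toLinearMap) := by
  set E := D.comap (oc k A).toLinearMap with hE
  have h1 : ∀ w : A ⊗[k] A, w ∈ LinearMap.range (TensorProduct.map E.subtype E.subtype) →
      ocF k A w ∈ LinearMap.range (TensorProduct.map D.subtype D.subtype) := by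
    rintro _ ⟨z, rfl⟩
    induction z with
    | zero => simp
    | add x y hx hy => simp only [map_add]; exact Submodule.add_mem _ hx hy
    | tmul a b => 
      exact ⟨(⟨oc k A b, b.2⟩ : D) ⊗ₜ (⟨oc k A a, a.2⟩ : D), by simp⟩
  have h2 : ∀ w : OC A ⊗[k] OC A, w ∈ LinearMap.range (TensorProduct.map D.subtype D.subtype) →
      ∀ v, ocF k A v = w → v ∈ LinearMap.range (TensorProduct.map E.subtype E.subtype) := by
    have e : ∀ v : A ⊗[k] A, TensorProduct.comm k A A (TensorProduct.map (oc k A).symm.toLinearMap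
        (oc k A).symm.toLinearMap (ocF k A v)) = v := by
      intro v
      induction v with
      | zero => simp
      | add x y hx hy => simp only [map_add, hx, hy]
      | tmul a b => simp
    rintro _ ⟨z, rfl⟩ v hv
    rw [← e v, hv]
    clear hv
    induction z with
    | zero => simp
    | add x y hx hy => simp only [map_add]; exact Submodule.add_mem _ hx hy
    | tmul a b => 
      exact ⟨(⟨(oc k A).symm b, b.2⟩ : E) ⊗ₜ (⟨(oc k A).symm a, a.2⟩ : E), by simp⟩
  constructor
  · intro h x hx
    exact h2 _ (h (oc k A x) hx) _ rfl
  · intro h x hx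
    exact h1 _ (h x hx)

end oc

section coreleft
variable {k : Type u} [Field k] {A : Type u} [Ring A] [HopfAlgebra k A]
  {B : Type u} [Ring B] [HopfAlgebra k B] {π : A →ₐc[k] B}

/-- the map on opposites -/
noncomputable def ocMap (π : A →ₐc[k] B) : OC A →ₐc[k] OC B :=
  BialgHom.ofAlgHom (AlgHom.ofLinearMap
      ((oc k B).toLinearMap ∘ₗ lm π ∘ₗ (oc k A).symm.toLinearMap)
      (map_one π) (fun x y => @map_mul A B _ _ _ _ _ π y x))
    (by
      ext x
      obtain ⟨x, rfl⟩ := (oc k A).surjective x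
      exact CoalgHomClass.counit_comp_apply π x)
    (by
      ext x
      obtain ⟨x, rfl⟩ := (oc k A).surjective x
      change TensorProduct.map ((oc k B).toLinearMap ∘ₗ lm π ∘ₗ (oc k A).symm.toLinearMap)
        ((oc k B).toLinearMap ∘ₗ lm π ∘ₗ (oc k A).symm.toLinearMap) (ocF k A (comul x)) =
        ocF k B (comul (π x))
      rw [← CoalgHomClass.map_comp_comul_apply π x]
      generalize comul (R := k) x = z
      induction z with
      | zero => simp
      | add x y hx hy => simp only [map_add, hx, hy]
      | tmul a b => simp)

theorem ocMap_apply (x : A) : ocMap π (oc k A x) = oc k B (π x) := rfl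

variable [IsAlgClosed k]

theorem core_left {hA : A →ₗ[k] k} (hs : Function.Surjective π)
    (hn : QG.IsLeftNormal k A (lm π)) (hi : IsInt hA)
    (hS2 : ∀ D : Submodule k B, QG.IsSimpleSubcoalgebra k B D →
      D.map ((antipode k) ∘ₗ (antipode k)) ≤ D) : ∃ h : B →ₗ[k] k, IsInt h := by
  have hs' : Function.Surjective (ocMap π) := hs
  have hi' : IsInt (hA ∘ₗ (oc k A).symm.toLinearMap) := oc_int.2 hi
  have hn' : QG.IsRightNormal k (OC A) (lm (ocMap π)) := by
    obtain ⟨lam, hl⟩ := hn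
    refine ⟨TensorProduct.map (oc k B).toLinearMap (oc k A).toLinearMap ∘ₗ
      (TensorProduct.comm k A B).toLinearMap ∘ₗ lam ∘ₗ (oc k B).symm.toLinearMap, ?_⟩
    ext x
    obtain ⟨x, rfl⟩ := (oc k A).surjective x
    have := LinearMap.congr_fun hl x
    simp only [LinearMap.comp_apply] at this
    change TensorProduct.map (oc k B).toLinearMap (oc k A).toLinearMap
      (TensorProduct.comm k A B (lam (lm π x))) = (lm (ocMap π)).rTensor (OC A) (QG.adR k (OC A) (oc k A x))
    rw [this, oc_adR]
    generalize QG.adL k A x = z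
    induction z with
    | zero => simp
    | add x y hx hy => simp only [map_add, hx, hy]
    | tmul a b => simp [ocMap_apply]
  have hS2' : ∀ D : Submodule k (OC B), QG.IsSimpleSubcoalgebra k (OC B) D →
      D.map ((antipode k) ∘ₗ (antipode k)) ≤ D := by
    intro D hD
    have hE : QG.IsSimpleSubcoalgebra k B (D.comap (oc k B).toLinearMap) := by
      refine ⟨(oc_subco D).1 hD.1, fun h => hD.2.1 ?_, fun E hE hE2 => ?_⟩
      · exact h
      · exact hD.2.2 (E.comap (oc k B).symm.toLinearMap) hE ((oc_subco _).2 hE2)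
    exact hS2 _ hE
  obtain ⟨h, hh⟩ := core hs' hn' hi' hS2'
  exact ⟨_, oc_int.1 hh⟩

theorem final (hs : Function.Surjective π) (hc : QG.IsCosemisimple k A)
    (hnorm : QG.IsLeftNormal k A (lm π) ∨ QG.IsRightNormal k A (lm π))
    (hS2 : ∀ D : Submodule k B, QG.IsSimpleSubcoalgebra k B D →
      D.map ((antipode k) ∘ₗ (antipode k)) ≤ D) :
    QG.IsCosemisimple k B ∧ QG.IsLeftNormal k A (lm π) ∧ QG.IsRightNormal k A (lm π) := by
  obtain ⟨hA, hi⟩ := int_of_css hc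
  obtain ⟨hB, hj⟩ : ∃ h : B →ₗ[k] k, IsInt h := by
    rcases hnorm with h | h
    · exact core_left hs h hi hS2
    · exact core hs h hi hS2
  refine ⟨css_of_int hj, ?_⟩
  rcases hnorm with h | h
  · exact ⟨h, right_of_left π hs (S_inj hi) (S_inj hj) h⟩
  · exact ⟨left_of_right π hs (S_inj hi) (S_inj hj) h, h⟩

end coreleft
end QGP

open QG HopfAlgebra in
/-- A left- or right-normal quantum subgroup `H ≤ G` of a
linearly reductive quantum group `G` (i.e. a normal surjection of Hopf
algebras `π : O(G) → O(H)` with `O(G)` cosemisimple) such that the squared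
antipode of `O(H)` leaves every simple subcoalgebra of `O(H)` invariant is
itself linearly reductive, and `π` is normal. -/
theorem statement_0 (k : Type u) [Field k] [IsAlgClosed k]
    (G H : Type u) [Ring G] [HopfAlgebra k G] [Ring H] [HopfAlgebra k H]
    (π : G →ₐc[k] H) (hsurj : Function.Surjective π)
    (hcss : IsCosemisimple k G)
    (hnorm : IsLeftNormal k G (π : G →ₗ[k] H) ∨ IsRightNormal k G (π : G →ₗ[k] H))
    (hS2 : ∀ D : Submodule k H, IsSimpleSubcoalgebra k H D →
      D.map ((antipode (R := k) (A := H)) ∘ₗ (antipode (R := k) (A := H))) ≤ D) :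
    IsCosemisimple k H ∧
      IsLeftNormal k G (π : G →ₗ[k] H) ∧ IsRightNormal k G (π : G →ₗ[k] H) := by
  exact QGP.final hsurj hcss hnorm hS2
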